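/- arXiv:physics/9705040 — 5 statements merged into one kernel-verified Lean document; each statement's English description precedes it below -/
import Mathlib

section
/- (Lemma A.2, eq. (A.8).) Let q be a path and ξ, η smooth vector fields. Define, for spatial indices i,j: ∂_i η̃^j(t) := (∂_i η^j)(q(t)) − (∂_i η^0)(q(t)) q̇^j(t), and ∂_j ξ̃̇^i(t) := q̇^ρ(t)(∂_ρ∂_j ξ^i)(q(t)) − q̇^ρ(t)(∂_ρ∂_j ξ^0)(q(t)) q̇^i(t) − (∂_j ξ^0)(q(t)) q̈^i(t) (the x^j-partial of dξ̃^i/dt with q, q̇, q̈ treated as independent). Also set ⟨∂²f⟩(t) := q̇^ρ(t) q̇^σ(t)(∂_ρ∂_σ f)(q(t)) for smooth f on ℝ^N. Then for all t ∈ ℝ: ∑_{i,j=1}^{N−1} ∂_j ξ̃̇^i(t) ∂_i η̃^j(t) = ∑_{μ,ν=0}^{N−1} (d/dt)[(∂_ν ξ^μ)(q(t))]·(∂_μ η^ν)(q(t)) + ∑_{ν} (∂_ν ξ^0)(q(t)) ⟨∂²η^ν⟩(t) − ∑_{μ} ⟨∂²ξ^μ⟩(t) (∂_μ η^0)(q(t))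 − (d²/dt²)[ξ^0(q(t))] · (d/dt)[η^0(q(t))] − (d/dt)[ξ^0(q(t))] · ⟨∂²η^0⟩(t) + ⟨∂²ξ^0⟩(t) · (d/dt)[η^0(q(t))] + (d/dt)[ (d/dt)[ξ^0(q(t))]·(d/dt)[η^0(q(t))] − ∑_{ν} (∂_ν ξ^0)(q(t)) (d/dt)[η^ν(q(t))] ]. -/
open Finset

/-- Partial derivative `∂_μ f` of a function on `ℝ^N = (Fin N → ℝ)`. -/
noncomputable def pd {N : ℕ} (f : (Fin N → ℝ) → ℝ) (μ : Fin N) (x : Fin N → ℝ) : ℝ :=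
  fderiv ℝ f x (Pi.single μ 1)

/-- Second partial derivative `∂_μ ∂_ν f`. -/
noncomputable def pd2 {N : ℕ} (f : (Fin N → ℝ) → ℝ) (μ ν : Fin N) (x : Fin N → ℝ) : ℝ :=
  pd (fun y => pd f ν y) μ x

/-- The contraction `⟨∂²f⟩(t) = q̇^ρ(t) q̇^σ(t) (∂_ρ∂_σ f)(q(t))`. -/
noncomputable def contr2 {N : ℕ} (q : ℝ → Fin N → ℝ) (f : (Fin N → ℝ) → ℝ) (t : ℝ) : ℝ :=
  ∑ ρ, ∑ σ, deriv (fun s => q s ρ) t * deriv (fun s => q s σ) t * pd2 f ρ σ (q t)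

/-!
The components `∂_i η̃^0` and `∂_j ξ̃̇^0` vanish along a path with `q^0(t) = t`, so the spatial
double sum may be taken over all indices. With `D = d/dt (∂ξ)`, `H = ∂η`, `v = q̇`, `a = q̈` and
`x = ∂ξ^0`, it is then the trace of `(D - v ⊗ D^0 - a ⊗ x) * (H - v ⊗ H^0)`. The chain rule
identifies `D v` with `⟨∂²ξ⟩`, `H v` with `η̇` and `H a` with `η̈ - ⟨∂²η⟩`; the last of these
produces the second derivatives that the product rule collects into a total derivative.
-/

open Matrix in
theorem trace_sub_vecMulVec_mul_sub_vecMulVec {n R : Type*} [Fintype n] [CommRing R]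
    (D H : Matrix n n R) (v a d x h : n → R) :
    ((D - vecMulVec v d - vecMulVec a x) * (H - vecMulVec v h)).trace =
      (D * H).trace - D *ᵥ v ⬝ᵥ h - d ⬝ᵥ H *ᵥ v + (d ⬝ᵥ v) * (h ⬝ᵥ v)
        - x ⬝ᵥ H *ᵥ a + (x ⬝ᵥ v) * (h ⬝ᵥ a) := by
  simp only [sub_mul, mul_sub, mul_vecMulVec, vecMulVec_mul, vecMulVec_mulVec,
    trace_sub, trace_vecMulVec, op_smul_eq_smul, dotProduct_smul, smul_eq_mul,
    dotProduct_mulVec, dotProduct_comm _ (_ ᵥ* H), dotProduct_comm _ h]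
  ring

section Curve

variable {N : ℕ} {q : ℝ → Fin N → ℝ} {f : (Fin N → ℝ) → ℝ} {t : ℝ}

theorem hasDerivAt_comp_curve (hq : DifferentiableAt ℝ q t) (hf : DifferentiableAt ℝ f (q t)) :
    HasDerivAt (fun s => f (q s)) (∑ ρ, deriv (fun s => q s ρ) t * pd f ρ (q t)) t := by
  have hd : HasDerivAt q (fun ρ => deriv (fun s => q s ρ) t) t :=
    hasDerivAt_pi.2 fun ρ => (differentiableAt_pi.1 hq ρ).hasDerivAt
  refine (hf.hasFDerivAt.comp_hasDerivAt t hd).congr_deriv ?_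
  simp only [pd, ← smul_eq_mul, ← map_smul, ← map_sum]
  rw [← pi_eq_sum_univ' fun ρ => deriv (fun s => q s ρ) t]

theorem differentiableAt_pd {x : Fin N → ℝ} (hf : ContDiffAt ℝ 2 f x) (μ : Fin N) :
    DifferentiableAt ℝ (pd f μ) x :=
  ((hf.fderiv_right (m := 1) (by norm_num)).clm_apply contDiffAt_const).differentiableAt
    one_ne_zero

theorem hasDerivAt_pd_comp_curve (hq : DifferentiableAt ℝ q t) (hf : ContDiffAt ℝ 2 f (q t))
    (ν : Fin N) :
    HasDerivAt (fun s => pd f ν (q s)) (∑ ρ, deriv (fun s => q s ρ) t * pd2 f ρ ν (q t)) t :=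
  hasDerivAt_comp_curve hq (differentiableAt_pd hf ν)

theorem contr2_eq_sum_deriv_pd_mul (hq : DifferentiableAt ℝ q t) (hf : ContDiffAt ℝ 2 f (q t)) :
    contr2 q f t = ∑ ν, deriv (fun s => pd f ν (q s)) t * deriv (fun s => q s ν) t := by
  simp only [(hasDerivAt_pd_comp_curve hq hf _).deriv, contr2, sum_mul]
  rw [sum_comm]
  exact sum_congr rfl fun _ _ => sum_congr rfl fun _ _ => mul_right_comm _ _ _

theorem deriv_comp_curve_eventuallyEq (hq : ContDiffAt ℝ 1 q t) (hf : ContDiffAt ℝ 1 f (q t)) :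
    deriv (fun s => f (q s)) =ᶠ[nhds t]
      fun s => ∑ ρ, deriv (fun u => q u ρ) s * pd f ρ (q s) := by
  filter_upwards [hq.eventually (by simp), hq.continuousAt.eventually (hf.eventually (by simp))]
    with s hqs hfs
  exact (hasDerivAt_comp_curve (hqs.differentiableAt one_ne_zero)
    (hfs.differentiableAt one_ne_zero)).deriv

theorem hasDerivAt_deriv_comp_curve (hq : ContDiffAt ℝ 2 q t) (hf : ContDiffAt ℝ 2 f (q t)) :
    HasDerivAt (deriv fun s => f (q s))
      (contr2 q f t + ∑ ρ, deriv (deriv fun s => q s ρ) t * pd f ρ (q t)) t := by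
  have hq' : DifferentiableAt ℝ q t := hq.differentiableAt two_ne_zero
  have hacc (ρ : Fin N) : HasDerivAt (deriv fun s => q s ρ) (deriv (deriv fun s => q s ρ) t) t :=
    (((contDiffAt_pi.1 hq ρ).derivWithin (m := 1) (by norm_num)).differentiableAt
      one_ne_zero).hasDerivAt
  have hpd (ρ : Fin N) := (hasDerivAt_pd_comp_curve hq' hf ρ).differentiableAt.hasDerivAt
  refine HasDerivAt.congr_of_eventuallyEq ?_
    (deriv_comp_curve_eventuallyEq (hq.of_le one_le_two) (hf.of_le one_le_two))
  refine (HasDerivAt.fun_sum fun ρ _ => (hacc ρ).mul (hpd ρ)).congr_deriv ?_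
  rw [contr2_eq_sum_deriv_pd_mul hq' hf, sum_add_distrib, add_comm]
  simp only [mul_comm]

end Curve

section Tilde

variable {N : ℕ} [NeZero N]

/-- The spatial derivative `∂_i η̃^j(t) = (∂_i η^j)(q(t)) − (∂_i η^0)(q(t)) q̇^j(t)` of
`η̃^j = η^j − η^0 q̇^j`, with `q̇` held fixed; `i` and `j` may also be the time index `0`. -/
noncomputable def pdTilde (q : ℝ → Fin N → ℝ) (η : Fin N → (Fin N → ℝ) → ℝ) (i j : Fin N)
    (t : ℝ) : ℝ :=
  pd (η j) i (q t) - pd (η 0) i (q t) * deriv (fun s => q s j) t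

/-- The derivative `∂_j ξ̃̇^i(t)` of `dξ̃^i/dt` in the direction `x^j`, with `q`, `q̇`, `q̈` treated
as independent; `i` and `j` may also be the time index `0`. -/
noncomputable def pdTildeDot (q : ℝ → Fin N → ℝ) (ξ : Fin N → (Fin N → ℝ) → ℝ) (j i : Fin N)
    (t : ℝ) : ℝ :=
  (∑ ρ, deriv (fun s => q s ρ) t * pd2 (ξ i) ρ j (q t))
    - (∑ ρ, deriv (fun s => q s ρ) t * pd2 (ξ 0) ρ j (q t)) * deriv (fun s => q s i) t
    - pd (ξ 0) j (q t) * deriv (deriv (fun s => q s i)) t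

variable {q : ℝ → Fin N → ℝ} {ξ η : Fin N → (Fin N → ℝ) → ℝ} {t : ℝ}

theorem pdTilde_zero_right (hv : deriv (fun s => q s 0) t = 1) (i : Fin N) :
    pdTilde q η i 0 t = 0 := by
  simp [pdTilde, hv]

theorem pdTildeDot_zero_right (hv : deriv (fun s => q s 0) t = 1)
    (ha : deriv (deriv fun s => q s 0) t = 0) (j : Fin N) :
    pdTildeDot q ξ j 0 t = 0 := by
  simp [pdTildeDot, hv, ha]

theorem sum_erase_zero_pdTildeDot_mul_pdTilde (hv : deriv (fun s => q s 0) t = 1)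
    (ha : deriv (deriv fun s => q s 0) t = 0) :
    ∑ i ∈ univ.erase 0, ∑ j ∈ univ.erase 0, pdTildeDot q ξ j i t * pdTilde q η i j t =
      ∑ i, ∑ j, pdTildeDot q ξ j i t * pdTilde q η i j t := by
  rw [sum_erase _ (by simp only [pdTildeDot_zero_right hv ha, zero_mul, sum_const_zero])]
  exact sum_congr rfl fun i _ => sum_erase _ (by rw [pdTilde_zero_right hv, mul_zero])

open Matrix in
theorem sum_pdTildeDot_mul_pdTilde (hq : ContDiffAt ℝ 2 q t)
    (hξ : ∀ μ, ContDiffAt ℝ 2 (ξ μ) (q t)) (hη : ∀ μ, ContDiffAt ℝ 2 (η μ) (q t)) :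
    ∑ i, ∑ j, pdTildeDot q ξ j i t * pdTilde q η i j t =
      (∑ μ, ∑ ν, deriv (fun s => pd (ξ μ) ν (q s)) t * pd (η ν) μ (q t))
        - (∑ μ, contr2 q (ξ μ) t * pd (η 0) μ (q t))
        - (∑ ν, deriv (fun s => pd (ξ 0) ν (q s)) t * deriv (fun s => η ν (q s)) t)
        + contr2 q (ξ 0) t * deriv (fun s => η 0 (q s)) t
        - (∑ ν, pd (ξ 0) ν (q t) * (deriv (deriv fun s => η ν (q s)) t - contr2 q (η ν) t))
        + deriv (fun s => ξ 0 (q s)) t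
          * (deriv (deriv fun s => η 0 (q s)) t - contr2 q (η 0) t) := by
  have hq' : DifferentiableAt ℝ q t := hq.differentiableAt two_ne_zero
  have hvel {f : (Fin N → ℝ) → ℝ} (hf : ContDiffAt ℝ 2 f (q t)) :=
    (hasDerivAt_comp_curve hq' (hf.differentiableAt two_ne_zero)).deriv
  let v : Fin N → ℝ := fun μ => deriv (fun s => q s μ) t
  let a : Fin N → ℝ := fun μ => deriv (deriv fun s => q s μ) t
  let D : Matrix (Fin N) (Fin N) ℝ := of fun μ ν => deriv (fun s => pd (ξ μ) ν (q s)) t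
  let H : Matrix (Fin N) (Fin N) ℝ := of fun μ ν => pd (η μ) ν (q t)
  let x : Fin N → ℝ := fun ν => pd (ξ 0) ν (q t)
  have hDot (i j : Fin N) :
      pdTildeDot q ξ j i t = (D - vecMulVec v (D 0) - vecMulVec a x) i j := by
    simp [pdTildeDot, D, v, a, x, vecMulVec_apply, mul_comm,
      (hasDerivAt_pd_comp_curve hq' (hξ _) _).deriv]
  have hTilde (i j : Fin N) : pdTilde q η i j t = (H - vecMulVec v (H 0)) j i := by
    simp [pdTilde, H, v, vecMulVec_apply, mul_comm]
  have hDv (μ : Fin N) : contr2 q (ξ μ) t = (D *ᵥ v) μ :=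
    contr2_eq_sum_deriv_pd_mul hq' (hξ μ)
  have hHv (ν : Fin N) : deriv (fun s => η ν (q s)) t = (H *ᵥ v) ν :=
    (hvel (hη ν)).trans (dotProduct_comm _ _)
  have hHa (ν : Fin N) :
      deriv (deriv fun s => η ν (q s)) t - contr2 q (η ν) t = (H *ᵥ a) ν := by
    rw [(hasDerivAt_deriv_comp_curve hq (hη ν)).deriv, add_sub_cancel_left]
    exact dotProduct_comm _ _
  have hxv : deriv (fun s => ξ 0 (q s)) t = x ⬝ᵥ v :=
    (hvel (hξ 0)).trans (dotProduct_comm _ _)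
  simp only [hDot, hTilde, hDv, hHv, hHa, hxv]
  exact trace_sub_vecMulVec_mul_sub_vecMulVec D H v a (D 0) x (H 0)

theorem lemma_A2_eq_A8_general (hq : ContDiffAt ℝ 2 q t)
    (hv : deriv (fun s => q s 0) t = 1) (ha : deriv (deriv fun s => q s 0) t = 0)
    (hξ : ∀ μ, ContDiffAt ℝ 2 (ξ μ) (q t)) (hη : ∀ μ, ContDiffAt ℝ 2 (η μ) (q t)) :
    ∑ i ∈ univ.erase 0, ∑ j ∈ univ.erase 0, pdTildeDot q ξ j i t * pdTilde q η i j t =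
      (∑ μ, ∑ ν, deriv (fun s => pd (ξ μ) ν (q s)) t * pd (η ν) μ (q t))
        + (∑ ν, pd (ξ 0) ν (q t) * contr2 q (η ν) t)
        - (∑ μ, contr2 q (ξ μ) t * pd (η 0) μ (q t))
        - deriv (deriv (fun s => ξ 0 (q s))) t * deriv (fun s => η 0 (q s)) t
        - deriv (fun s => ξ 0 (q s)) t * contr2 q (η 0) t
        + contr2 q (ξ 0) t * deriv (fun s => η 0 (q s)) t
        + deriv (fun s =>
            deriv (fun u => ξ 0 (q u)) s * deriv (fun u => η 0 (q u)) s
              - ∑ ν, pd (ξ 0) ν (q s) * deriv (fun u => η ν (q u)) s) t := by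
  have hpd (ν : Fin N) :=
    (hasDerivAt_pd_comp_curve (hq.differentiableAt two_ne_zero) (hξ 0) ν).differentiableAt
  have hderiv {f : (Fin N → ℝ) → ℝ} (hf : ContDiffAt ℝ 2 f (q t)) :=
    (hasDerivAt_deriv_comp_curve hq hf).differentiableAt
  have htotal := ((hderiv (hξ 0)).hasDerivAt.mul (hderiv (hη 0)).hasDerivAt).sub
    (HasDerivAt.fun_sum fun ν (_ : ν ∈ univ) =>
      (hpd ν).hasDerivAt.mul (hderiv (hη ν)).hasDerivAt)
  rw [sum_erase_zero_pdTildeDot_mul_pdTilde hv ha, sum_pdTildeDot_mul_pdTilde hq hξ hη]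
  refine Eq.trans ?_ (congrArg _ htotal.deriv.symm)
  simp only [mul_sub, sum_sub_distrib, sum_add_distrib]
  ring

end Tilde

/-- Lemma A.2, eq. (A.8): with `ξ̃^i = ξ^i − ξ^0 q̇^i`, one has
`∂_j ξ̃̇^i ∂_i η̃^j = ∂_ν ξ̇^μ ∂_μ η^ν + ∂_ν ξ^0 ⟨∂²η^ν⟩ − ⟨∂²ξ^μ⟩ ∂_μ η^0
 − ξ̈^0 η̇^0 − ξ̇^0 ⟨∂²η^0⟩ + ⟨∂²ξ^0⟩ η̇^0 + d/dt(ξ̇^0 η̇^0 − ∂_ν ξ^0 η̇^ν)`. -/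
theorem lemma_A2_eq_A8 (N : ℕ) [NeZero N]
    (q : ℝ → Fin N → ℝ) (hq : ContDiff ℝ (⊤ : ℕ∞) q) (hq0 : ∀ t, q t 0 = t)
    (ξ η : Fin N → (Fin N → ℝ) → ℝ)
    (hξ : ∀ μ, ContDiff ℝ (⊤ : ℕ∞) (ξ μ)) (hη : ∀ μ, ContDiff ℝ (⊤ : ℕ∞) (η μ)) (t : ℝ) :
    (∑ i ∈ Finset.univ.erase (0 : Fin N), ∑ j ∈ Finset.univ.erase (0 : Fin N),
      ((∑ ρ, deriv (fun s => q s ρ) t * pd2 (ξ i) ρ j (q t))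
          - (∑ ρ, deriv (fun s => q s ρ) t * pd2 (ξ 0) ρ j (q t))
              * deriv (fun s => q s i) t
          - pd (ξ 0) j (q t) * deriv (deriv (fun s => q s i)) t)
        * (pd (η j) i (q t) - pd (η 0) i (q t) * deriv (fun s => q s j) t))
    =
    (∑ μ, ∑ ν, deriv (fun s => pd (ξ μ) ν (q s)) t * pd (η ν) μ (q t))
      + (∑ ν, pd (ξ 0) ν (q t) * contr2 q (η ν) t)
      - (∑ μ, contr2 q (ξ μ) t * pd (η 0) μ (q t))
      - deriv (deriv (fun s => ξ 0 (q s))) t * deriv (fun s => η 0 (q s)) t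
      - deriv (fun s => ξ 0 (q s)) t * contr2 q (η 0) t
      + contr2 q (ξ 0) t * deriv (fun s => η 0 (q s)) t
      + deriv (fun s =>
          deriv (fun u => ξ 0 (q u)) s * deriv (fun u => η 0 (q u)) s
            - ∑ ν, pd (ξ 0) ν (q s) * deriv (fun u => η ν (q u)) s) t := by
  have hq2 : ContDiff ℝ 2 q := hq.of_le (by norm_cast)
  exact lemma_A2_eq_A8_general hq2.contDiffAt (by simp [hq0]) (by simp [hq0])
    (fun μ => ((hξ μ).of_le (by norm_cast)).contDiffAt)
    (fun μ => ((hη μ).of_le (by norm_cast)).contDiffAt)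
end

section
/- (Transformation law (2.1) of S_n in the realization (3.8), classical part of Theorem 3.1.) Let ξ be a smooth vector field with admissible components ξ^μ, let g_{ν1…νn} be a family of admissible functions, and let (q_ε) be a variation of loops along ξ. Then the function ε ↦ S_n^{ν1…νn}(g)[q_ε] is differentiable at ε = 0 and (d/dε)|_{ε=0} S_n^{ν1…νn}(g)[q_ε] = S_n^{ν1…νn}( ξ^μ ∂_μ g_{ν1…νn} + ∑_{j=1}^{n} (∂_{νj} ξ^μ) g_{ν1…μ…νn} )[q_0] − (n−1) S_{n+1}^{μν1…νn}( (∂_μ ξ^0) g_{ν1…νn} )[q_0], where in the second term the argument indexed by μν_1…ν_n is (∂_μ ξ^0) g_{ν1…νn}. -/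
open Finset Real

/-- A function on `ℝ^N` is admissible if it is smooth and `2π`-periodic in `x^0`. -/
def Admissible {N : ℕ} [NeZero N] (f : (Fin N → ℝ) → ℝ) : Prop :=
  ContDiff ℝ (⊤ : ℕ∞) f ∧ ∀ x, f (x + Pi.single 0 (2 * π)) = f x

/-- A loop is a smooth map `q : ℝ → ℝ^N` with `q^0(t) = t` and each spatial
component `2π`-periodic. -/
def IsLoop {N : ℕ} [NeZero N] (q : ℝ → Fin N → ℝ) : Prop :=
  ContDiff ℝ (⊤ : ℕ∞) q ∧ (∀ t, q t 0 = t) ∧ ∀ t, ∀ i ≠ (0 : Fin N), q (t + 2 * π) i = q t i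

/-- A variation of loops along the vector field `ξ`: a jointly smooth family of loops
`q_ε` with `∂_ε q_ε^μ(t)|_{ε=0} = ξ^μ(q₀(t)) − q̇₀^μ(t) ξ^0(q₀(t))`. -/
def IsVariation {N : ℕ} [NeZero N] (ξ : Fin N → (Fin N → ℝ) → ℝ)
    (Q : ℝ → ℝ → Fin N → ℝ) : Prop :=
  (∀ ε, IsLoop (Q ε)) ∧ ContDiff ℝ (⊤ : ℕ∞) (fun p : ℝ × ℝ => Q p.1 p.2) ∧
    ∀ t μ, deriv (fun ε => Q ε t μ) 0
      = ξ μ (Q 0 t) - deriv (fun s => Q 0 s μ) t * ξ 0 (Q 0 t)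

/-- `S_n^{ν₁…νₙ}(g)[q] = (1/2πi) ∫₀^{2π} q̇^{ν₁}⋯q̇^{νₙ} g_{ν₁…νₙ}(q(t)) dt`,
summed over all the indices. -/
noncomputable def Sop {N : ℕ} (n : ℕ) (g : (Fin n → Fin N) → (Fin N → ℝ) → ℝ)
    (q : ℝ → Fin N → ℝ) : ℂ :=
  (1 / (2 * π * Complex.I)) *
    ((∫ t in (0:ℝ)..(2 * π), ∑ ν : Fin n → Fin N,
        (∏ l, deriv (fun s => q s (ν l)) t) * g ν (q t) : ℝ) : ℂ)

/-!
The integrand of `S_n(g)[q]` is `L(q, q̇)` for the Lagrangian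
`L(x, v) = v^{ν₁}⋯v^{νₙ} g_{ν₁…νₙ}(x)`, which is homogeneous of degree `n` in `v`. A variation
`δq = ξ(q) - φ(q) q̇` has velocity `δq̇ = Dξ(q) q̇ - φ(q) q̈ - (Dφ(q) q̇) q̇`, so by
linearity of `DL`

`δL = DL(ξ(q), Dξ(q) q̇) - φ(q) (d/dt) L - (Dφ(q) q̇) DL(0, q̇)`.

Euler's identity gives `DL(0, q̇) = n L`, and moving `φ` under `d/dt` turns the last two terms into
`-(d/dt)(φ L) - (n - 1) (Dφ(q) q̇) L`. The total derivative integrates to zero by periodicity, and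
the first term is the Lagrangian of the Lie derivative of `g` along `ξ`.
-/

section Bivariate

variable {E : Type*} [NormedAddCommGroup E] [NormedSpace ℝ E] {f : ℝ → ℝ → E}

theorem hasDerivAt_fst_of_differentiableAt_uncurry {ε t : ℝ}
    (hf : DifferentiableAt ℝ (Function.uncurry f) (ε, t)) :
    HasDerivAt (fun ε => f ε t) (fderiv ℝ (Function.uncurry f) (ε, t) (1, 0)) ε :=
  hf.hasFDerivAt.comp_hasDerivAt (f := fun ε => (ε, t)) ε
    ((hasDerivAt_id ε).prodMk (hasDerivAt_const ε t))

theorem hasDerivAt_snd_of_differentiableAt_uncurry {ε t : ℝ}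
    (hf : DifferentiableAt ℝ (Function.uncurry f) (ε, t)) :
    HasDerivAt (f ε) (fderiv ℝ (Function.uncurry f) (ε, t) (0, 1)) t :=
  hf.hasFDerivAt.comp_hasDerivAt (f := fun t => (ε, t)) t
    ((hasDerivAt_const t ε).prodMk (hasDerivAt_id t))

theorem contDiff_uncurry_deriv {n : WithTop ℕ∞} (hf : ContDiff ℝ (n + 1) (Function.uncurry f)) :
    ContDiff ℝ n (Function.uncurry fun ε => deriv (f ε)) := by
  have hderiv : (Function.uncurry fun ε => deriv (f ε))
      = fun p => fderiv ℝ (Function.uncurry f) p (0, 1) :=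
    funext fun p => (hasDerivAt_snd_of_differentiableAt_uncurry
      (hf.differentiable (by simp) p)).deriv
  rw [hderiv]
  exact (hf.fderiv_right le_rfl).clm_apply contDiff_const

theorem hasDerivAt_deriv_comm (hf : ContDiff ℝ 2 (Function.uncurry f)) (ε t : ℝ) :
    HasDerivAt (fun ε => deriv (f ε) t) (deriv (fun s => deriv (fun ε => f ε s) ε) t) ε := by
  let F := Function.uncurry f
  have hF : Differentiable ℝ F := hf.differentiable two_ne_zero
  have hF' : DifferentiableAt ℝ (Function.uncurry fun ε t => fderiv ℝ F (ε, t)) (ε, t) :=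
    (hf.fderiv_right (m := 1) (by norm_num)).differentiable one_ne_zero _
  have hsymm : IsSymmSndFDerivAt ℝ F (ε, t) := hf.contDiffAt.isSymmSndFDerivAt (by simp)
  have hfst := (hasDerivAt_fst_of_differentiableAt_uncurry hF').clm_apply
    (hasDerivAt_const ε ((0, 1) : ℝ × ℝ))
  have hsnd := (hasDerivAt_snd_of_differentiableAt_uncurry hF').clm_apply
    (hasDerivAt_const t ((1, 0) : ℝ × ℝ))
  simp only [(hasDerivAt_snd_of_differentiableAt_uncurry (hF _)).deriv,
    (hasDerivAt_fst_of_differentiableAt_uncurry (hF _)).deriv]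
  rw [hsnd.deriv]
  convert! hfst using 1
  simpa [Function.uncurry_def] using hsymm.eq (0, 1) (1, 0)

theorem hasDerivAt_intervalIntegral_of_contDiff_uncurry (hf : ContDiff ℝ 1 (Function.uncurry f))
    (a b ε₀ : ℝ) :
    HasDerivAt (fun ε => ∫ t in a..b, f ε t) (∫ t in a..b, deriv (fun ε => f ε t) ε₀) ε₀ := by
  have hdiff := hf.differentiable one_ne_zero
  have hcont : Continuous fun p => fderiv ℝ (Function.uncurry f) p (1, 0) :=
    (hf.continuous_fderiv one_ne_zero).clm_apply continuous_const
  obtain ⟨C, hC⟩ := ((isCompact_closedBall ε₀ 1).prod isCompact_uIcc).exists_bound_of_continuousOn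
    (hcont.continuousOn (s := Metric.closedBall ε₀ 1 ×ˢ Set.uIcc a b))
  have hslice (ε : ℝ) : Continuous (f ε) := hf.continuous.comp (Continuous.prodMk_right ε)
  simp only [(hasDerivAt_fst_of_differentiableAt_uncurry (hdiff _)).deriv]
  exact (intervalIntegral.hasDerivAt_integral_of_dominated_loc_of_deriv_le
    (F' := fun ε t => fderiv ℝ (Function.uncurry f) (ε, t) (1, 0)) (bound := fun _ => C)
    (Metric.closedBall_mem_nhds ε₀ one_pos)
    (.of_forall fun ε => (hslice ε).aestronglyMeasurable)
    ((hslice ε₀).intervalIntegrable a b)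
    (hcont.comp (Continuous.prodMk_right ε₀)).aestronglyMeasurable
    (.of_forall fun t ht ε hε => hC (ε, t) ⟨hε, Set.uIoc_subset_uIcc ht⟩)
    intervalIntegrable_const
    (.of_forall fun t _ ε _ => hasDerivAt_fst_of_differentiableAt_uncurry (hdiff (ε, t)))).2

end Bivariate

section FirstVariation

variable {E F : Type*} [NormedAddCommGroup E] [NormedSpace ℝ E] [NormedAddCommGroup F]
  [NormedSpace ℝ F]

/-- The lift of a curve to the tangent bundle `E × E`, i.e. its position and velocity. -/
noncomputable def tangentLift (q : ℝ → E) (t : ℝ) : E × E :=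
  (q t, deriv q t)

/-- The complete lift of a vector field to the tangent bundle `E × E`: the generator of the
tangent maps of the flow of `ξ`. -/
noncomputable def completeLift (ξ : E → E) (p : E × E) : E × E :=
  (ξ p.1, fderiv ℝ ξ p.1 p.2)

theorem contDiff_uncurry_tangentLift {n : WithTop ℕ∞} {Q : ℝ → ℝ → E}
    (hQ : ContDiff ℝ (n + 1) (Function.uncurry Q)) :
    ContDiff ℝ n (Function.uncurry fun ε => tangentLift (Q ε)) :=
  (hQ.of_le le_self_add).prodMk (contDiff_uncurry_deriv hQ)

theorem tangentLift_add_of_quasiperiodic {q : ℝ → E} {T : ℝ} {p : E}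
    (hq : ∀ t, q (t + T) = q t + p) (t : ℝ) :
    tangentLift q (t + T) = tangentLift q t + (p, 0) := by
  have hvel : deriv q (t + T) = deriv q t := by
    rw [← deriv_comp_add_const]
    simp only [hq, deriv_add_const]
  simp [tangentLift, hq, hvel]

theorem continuous_completeLift {ξ : E → E} (hξ : ContDiff ℝ 1 ξ) :
    Continuous (completeLift ξ) :=
  (hξ.continuous.comp continuous_fst).prodMk
    (((hξ.continuous_fderiv one_ne_zero).comp continuous_fst).clm_apply continuous_snd)

theorem fderiv_velocity_of_homogeneous {L : E × E → F} {k : ℕ} {x v : E}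
    (hL : DifferentiableAt ℝ L (x, v)) (hhom : ∀ c : ℝ, L (x, c • v) = c ^ k • L (x, v)) :
    fderiv ℝ L (x, v) (0, v) = (k : ℝ) • L (x, v) := by
  have hray : HasDerivAt (fun c : ℝ => (x, c • v)) (0, v) 1 := by
    simpa using (hasDerivAt_const (1 : ℝ) x).prodMk ((hasDerivAt_id (1 : ℝ)).smul_const v)
  have hchain : HasDerivAt (fun c : ℝ => L (x, c • v)) (fderiv ℝ L (x, v) (0, v)) 1 :=
    HasFDerivAt.comp_hasDerivAt_of_eq 1 hL.hasFDerivAt hray (by simp)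
  have hpow : HasDerivAt (fun c : ℝ => c ^ k • L (x, v)) ((k : ℝ) • L (x, v)) 1 := by
    simpa using (hasDerivAt_pow k (1 : ℝ)).smul_const (L (x, v))
  simp only [hhom] at hchain
  exact hchain.unique hpow

variable {ξ : E → E} {φ : E → ℝ} {Q : ℝ → ℝ → E} {ε₀ : ℝ} {L : E × E → F} {k : ℕ}

theorem hasDerivAt_tangentLift_of_variation (hξ : Differentiable ℝ ξ) (hφ : Differentiable ℝ φ)
    (hQ : ContDiff ℝ 2 (Function.uncurry Q))
    (hvar : ∀ t, deriv (fun ε => Q ε t) ε₀ = ξ (Q ε₀ t) - φ (Q ε₀ t) • deriv (Q ε₀) t) (t : ℝ) :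
    HasDerivAt (fun ε => tangentLift (Q ε) t)
      (completeLift ξ (tangentLift (Q ε₀) t) - φ (Q ε₀ t) • deriv (tangentLift (Q ε₀)) t
        - fderiv ℝ φ (Q ε₀ t) (deriv (Q ε₀) t) • (0, deriv (Q ε₀) t)) ε₀ := by
  set q := Q ε₀
  have hq : ContDiff ℝ 2 q := hQ.comp (contDiff_prodMk_right ε₀)
  have hq' : HasDerivAt q (deriv q t) t := (hq.differentiable two_ne_zero t).hasDerivAt
  have hq'' : HasDerivAt (deriv q) (deriv (deriv q) t) t :=
    ((contDiff_uncurry_deriv (n := 1) hQ).comp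
      (contDiff_prodMk_right ε₀) |>.differentiable one_ne_zero t).hasDerivAt
  have hlift : deriv (tangentLift q) t = (deriv q t, deriv (deriv q) t) := (hq'.prodMk hq'').deriv
  have hfield : HasDerivAt (fun s => ξ (q s) - φ (q s) • deriv q s)
      (fderiv ℝ ξ (q t) (deriv q t)
        - (φ (q t) • deriv (deriv q) t + fderiv ℝ φ (q t) (deriv q t) • deriv q t)) t :=
    ((hξ _).hasFDerivAt.comp_hasDerivAt t hq').sub
      (((hφ _).hasFDerivAt.comp_hasDerivAt t hq').smul hq'')
  have hpos : HasDerivAt (fun ε => Q ε t) (ξ (q t) - φ (q t) • deriv q t) ε₀ := by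
    rw [← hvar t]
    exact (hasDerivAt_fst_of_differentiableAt_uncurry
      (hQ.differentiable two_ne_zero (ε₀, t))).differentiableAt.hasDerivAt
  have hvel := hasDerivAt_deriv_comm hQ ε₀ t
  simp only [hvar, hfield.deriv] at hvel
  convert! hpos.prodMk hvel using 1
  simp [hlift, completeLift, tangentLift, sub_sub, q]

theorem hasDerivAt_lagrangian_of_variation (hL : Differentiable ℝ L)
    (hhom : ∀ x v, ∀ c : ℝ, L (x, c • v) = c ^ k • L (x, v))
    (hξ : Differentiable ℝ ξ) (hφ : Differentiable ℝ φ)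
    (hQ : ContDiff ℝ 2 (Function.uncurry Q))
    (hvar : ∀ t, deriv (fun ε => Q ε t) ε₀ = ξ (Q ε₀ t) - φ (Q ε₀ t) • deriv (Q ε₀) t) (t : ℝ) :
    HasDerivAt (fun ε => L (tangentLift (Q ε) t))
      (fderiv ℝ L (tangentLift (Q ε₀) t) (completeLift ξ (tangentLift (Q ε₀) t))
        - ((k : ℝ) - 1) • fderiv ℝ φ (Q ε₀ t) (deriv (Q ε₀) t) • L (tangentLift (Q ε₀) t)
        - deriv (fun s => φ (Q ε₀ s) • L (tangentLift (Q ε₀) s)) t) ε₀ := by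
  set q := Q ε₀
  have hq : Differentiable ℝ q :=
    (hQ.comp (contDiff_prodMk_right ε₀)).differentiable two_ne_zero
  have hlift : Differentiable ℝ (tangentLift q) :=
    ((contDiff_uncurry_tangentLift (n := 1) hQ).comp
      (contDiff_prodMk_right ε₀)).differentiable one_ne_zero
  have heuler : fderiv ℝ L (tangentLift q t) (0, deriv q t) = (k : ℝ) • L (tangentLift q t) :=
    fderiv_velocity_of_homogeneous (hL _) (hhom _ _)
  have htotal : HasDerivAt (fun s => φ (q s) • L (tangentLift q s))
      (φ (q t) • fderiv ℝ L (tangentLift q t) (deriv (tangentLift q) t)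
        + fderiv ℝ φ (q t) (deriv q t) • L (tangentLift q t)) t :=
    ((hφ _).hasFDerivAt.comp_hasDerivAt t (hq t).hasDerivAt).smul
      ((hL _).hasFDerivAt.comp_hasDerivAt t (hlift t).hasDerivAt)
  convert! (hL _).hasFDerivAt.comp_hasDerivAt ε₀
    (hasDerivAt_tangentLift_of_variation hξ hφ hQ hvar t) using 1
  rw [htotal.deriv, map_sub, map_sub, map_smul, map_smul, heuler]
  module

theorem hasDerivAt_integral_lagrangian_of_variation [CompleteSpace F] (hL : ContDiff ℝ 1 L)
    (hhom : ∀ x v, ∀ c : ℝ, L (x, c • v) = c ^ k • L (x, v))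
    (hξ : ContDiff ℝ 1 ξ) (hφ : ContDiff ℝ 1 φ) (hQ : ContDiff ℝ 2 (Function.uncurry Q))
    (hvar : ∀ t, deriv (fun ε => Q ε t) ε₀ = ξ (Q ε₀ t) - φ (Q ε₀ t) • deriv (Q ε₀) t) (a b : ℝ) :
    HasDerivAt (fun ε => ∫ t in a..b, L (tangentLift (Q ε) t))
      ((∫ t in a..b, fderiv ℝ L (tangentLift (Q ε₀) t) (completeLift ξ (tangentLift (Q ε₀) t)))
        - ((k : ℝ) - 1) •
          (∫ t in a..b, fderiv ℝ φ (Q ε₀ t) (deriv (Q ε₀) t) • L (tangentLift (Q ε₀) t))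
        - (φ (Q ε₀ b) • L (tangentLift (Q ε₀) b) - φ (Q ε₀ a) • L (tangentLift (Q ε₀) a))) ε₀ := by
  have hlift := contDiff_uncurry_tangentLift (n := 1) hQ
  have hmain := hasDerivAt_intervalIntegral_of_contDiff_uncurry
    (f := fun ε t => L (tangentLift (Q ε) t)) (hL.comp hlift) a b ε₀
  simp only [(hasDerivAt_lagrangian_of_variation (hL.differentiable one_ne_zero) hhom
    (hξ.differentiable one_ne_zero) (hφ.differentiable one_ne_zero) hQ hvar _).deriv] at hmain
  set q := Q ε₀
  have hq : ContDiff ℝ 1 q := (hQ.comp (contDiff_prodMk_right ε₀)).of_le one_le_two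
  have hq' : Continuous (deriv q) := hq.continuous_deriv le_rfl
  have hlift₀ : ContDiff ℝ 1 (tangentLift q) := hlift.comp (contDiff_prodMk_right ε₀)
  have hlie : Continuous fun t => fderiv ℝ L (tangentLift q t) (completeLift ξ (tangentLift q t)) :=
    ((hL.continuous_fderiv one_ne_zero).comp hlift₀.continuous).clm_apply
      ((continuous_completeLift hξ).comp hlift₀.continuous)
  have hweight : Continuous fun t => fderiv ℝ φ (q t) (deriv q t) • L (tangentLift q t) :=
    (((hφ.continuous_fderiv one_ne_zero).comp hq.continuous).clm_apply hq').smul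
      (hL.continuous.comp hlift₀.continuous)
  have htotal : ContDiff ℝ 1 fun s => φ (q s) • L (tangentLift q s) :=
    (hφ.comp hq).smul (hL.comp hlift₀)
  have hinteg_lie := hlie.intervalIntegrable (μ := MeasureTheory.volume) a b
  have hinteg_weight : IntervalIntegrable
      (fun t => ((k : ℝ) - 1) • fderiv ℝ φ (q t) (deriv q t) • L (tangentLift q t))
      MeasureTheory.volume a b := (hweight.intervalIntegrable a b).smul _
  have hinteg_total := (htotal.continuous_deriv le_rfl).intervalIntegrable
    (μ := MeasureTheory.volume) a b
  rwa [intervalIntegral.integral_sub (hinteg_lie.sub hinteg_weight) hinteg_total,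
    intervalIntegral.integral_sub hinteg_lie hinteg_weight, intervalIntegral.integral_smul,
    intervalIntegral.integral_deriv_eq_sub
      (fun t _ => htotal.differentiable one_ne_zero t) hinteg_total] at hmain

end FirstVariation

section TensorLagrangian

theorem sum_sum_update_swap {ι κ M : Type*} [Fintype ι] [Fintype κ] [DecidableEq κ]
    [AddCommMonoid M] (F : (κ → ι) → ι → M) (j : κ) :
    ∑ ν, ∑ μ, F ν μ = ∑ ν, ∑ μ, F (Function.update ν j μ) (ν j) := by
  have hswap : Function.Involutive fun p : (κ → ι) × ι => (Function.update p.1 j p.2, p.1 j) :=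
    fun p => by simp
  simp only [← Fintype.sum_prod_type']
  exact (Equiv.sum_comp hswap.toPerm fun p : (κ → ι) × ι => F p.1 p.2).symm

variable {N n : ℕ}

theorem fderiv_apply_eq_sum_pd (f : (Fin N → ℝ) → ℝ) (x v : Fin N → ℝ) :
    fderiv ℝ f x v = ∑ μ, v μ * pd f μ x := by
  conv_lhs => rw [pi_eq_sum_univ' v, map_sum]
  simp [pd]

/-- The Lagrangian `(x, v) ↦ v^{ν₁}⋯v^{νₙ} g_{ν₁…νₙ}(x)` of the covariant tensor field `g`: the
integrand of `Sop` as a function of position and velocity. -/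
noncomputable def tensorLagrangian (g : (Fin n → Fin N) → (Fin N → ℝ) → ℝ)
    (p : (Fin N → ℝ) × (Fin N → ℝ)) : ℝ :=
  ∑ ν : Fin n → Fin N, (∏ l, p.2 (ν l)) * g ν p.1

/-- The components of the Lie derivative along `ξ` of the covariant tensor field `g`. -/
noncomputable def lieDeriv (ξ : Fin N → (Fin N → ℝ) → ℝ)
    (g : (Fin n → Fin N) → (Fin N → ℝ) → ℝ) (ν : Fin n → Fin N) (x : Fin N → ℝ) : ℝ :=
  (∑ μ, ξ μ x * pd (g ν) μ x) + ∑ j, ∑ μ, pd (ξ μ) (ν j) x * g (Function.update ν j μ) x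

variable {g : (Fin n → Fin N) → (Fin N → ℝ) → ℝ} {ξ : Fin N → (Fin N → ℝ) → ℝ}

theorem contDiff_tensorLagrangian {m : WithTop ℕ∞} (hg : ∀ ν, ContDiff ℝ m (g ν)) :
    ContDiff ℝ m (tensorLagrangian g) :=
  ContDiff.sum fun ν _ =>
    (contDiff_prod fun l _ => (contDiff_apply ℝ ℝ (ν l)).comp contDiff_snd).mul
      ((hg ν).comp contDiff_fst)

theorem periodic_tensorLagrangian {p : Fin N → ℝ} (hg : ∀ ν, Function.Periodic (g ν) p) :
    Function.Periodic (tensorLagrangian g) (p, 0) := fun y => by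
  simp [tensorLagrangian, (hg _) y.1]

theorem tensorLagrangian_smul (g : (Fin n → Fin N) → (Fin N → ℝ) → ℝ) (x v : Fin N → ℝ) (c : ℝ) :
    tensorLagrangian g (x, c • v) = c ^ n • tensorLagrangian g (x, v) := by
  simp [tensorLagrangian, Finset.prod_mul_distrib, Finset.mul_sum, mul_assoc]

theorem tensorLagrangian_pd_mul (φ : (Fin N → ℝ) → ℝ)
    (g : (Fin n → Fin N) → (Fin N → ℝ) → ℝ) (x v : Fin N → ℝ) :
    tensorLagrangian (fun κ x => pd φ (κ 0) x * g (fun l => κ l.succ) x) (x, v)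
      = fderiv ℝ φ x v * tensorLagrangian g (x, v) := by
  simp only [tensorLagrangian, fderiv_apply_eq_sum_pd, Finset.sum_mul_sum,
    ← Fintype.sum_prod_type']
  rw [← (Fin.consEquiv fun _ => Fin N).sum_comp]
  refine Finset.sum_congr rfl fun p _ => ?_
  simp only [Fin.prod_univ_succ, Fin.consEquiv_apply, Fin.cons_zero, Fin.cons_succ]
  ring

theorem fderiv_tensorLagrangian (hg : ∀ ν, Differentiable ℝ (g ν)) (x v x' v' : Fin N → ℝ) :
    fderiv ℝ (tensorLagrangian g) (x, v) (x', v')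
      = ∑ ν : Fin n → Fin N, ((∏ l, v (ν l)) * fderiv ℝ (g ν) x x'
          + ∑ j, (∏ l ∈ univ.erase j, v (ν l)) * v' (ν j) * g ν x) := by
  let coord (μ : Fin N) : (Fin N → ℝ) × (Fin N → ℝ) →L[ℝ] ℝ :=
    ContinuousLinearMap.proj μ ∘L ContinuousLinearMap.snd ℝ _ _
  have hcoeff (ν : Fin n → Fin N) : HasFDerivAt (fun p : (Fin N → ℝ) × (Fin N → ℝ) => g ν p.1)
      (fderiv ℝ (g ν) x ∘L ContinuousLinearMap.fst ℝ (Fin N → ℝ) (Fin N → ℝ)) (x, v) :=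
    (hg ν x).hasFDerivAt.comp (x, v) hasFDerivAt_fst
  have hlagrangian : HasFDerivAt (tensorLagrangian g) _ (x, v) := HasFDerivAt.fun_sum fun ν _ =>
    (HasFDerivAt.finsetProd fun l _ => (coord (ν l)).hasFDerivAt).fun_mul (hcoeff ν)
  rw [hlagrangian.fderiv]
  simp [coord, Finset.mul_sum, mul_comm]

theorem fderiv_tensorLagrangian_completeLift (hg : ∀ ν, Differentiable ℝ (g ν))
    (hξ : ∀ μ, Differentiable ℝ (ξ μ)) (p : (Fin N → ℝ) × (Fin N → ℝ)) :
    fderiv ℝ (tensorLagrangian g) p (completeLift (fun x μ => ξ μ x) p)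
      = tensorLagrangian (lieDeriv ξ g) p := by
  obtain ⟨x, v⟩ := p
  have hlift (μ : Fin N) : fderiv ℝ (fun x μ => ξ μ x) x v μ = ∑ ρ, v ρ * pd (ξ μ) ρ x := by
    rw [fderiv_pi fun μ => hξ μ x, ContinuousLinearMap.pi_apply, fderiv_apply_eq_sum_pd]
  have hswap (j : Fin n) :
      ∑ ν : Fin n → Fin N, (∏ l ∈ univ.erase j, v (ν l)) * (∑ ρ, v ρ * pd (ξ (ν j)) ρ x) * g ν x
        = ∑ ν : Fin n → Fin N,
          (∏ l, v (ν l)) * ∑ μ, pd (ξ μ) (ν j) x * g (Function.update ν j μ) x := by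
    simp only [Finset.mul_sum, Finset.sum_mul]
    rw [sum_sum_update_swap _ j]
    refine Finset.sum_congr rfl fun ν _ => Finset.sum_congr rfl fun μ _ => ?_
    have hrest : ∏ l ∈ univ.erase j, v (Function.update ν j μ l) = ∏ l ∈ univ.erase j, v (ν l) :=
      Finset.prod_congr rfl fun l hl => by rw [Function.update_of_ne (Finset.ne_of_mem_erase hl)]
    rw [hrest, Function.update_self, ← Finset.prod_erase_mul univ _ (Finset.mem_univ j)]
    ring
  rw [completeLift, fderiv_tensorLagrangian hg, Finset.sum_add_distrib, Finset.sum_comm]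
  simp only [hlift, hswap, fderiv_apply_eq_sum_pd, tensorLagrangian, lieDeriv, mul_add,
    Finset.sum_add_distrib]
  rw [Finset.sum_comm]
  simp only [Finset.mul_sum]

theorem Sop_eq_integral_tensorLagrangian (g : (Fin n → Fin N) → (Fin N → ℝ) → ℝ)
    {q : ℝ → Fin N → ℝ} (hq : Differentiable ℝ q) :
    Sop n g q = 1 / (2 * π * Complex.I) *
      (∫ t in (0 : ℝ)..2 * π, tensorLagrangian g (tangentLift q t) : ℝ) := by
  simp only [Sop, tensorLagrangian, tangentLift,
    deriv_pi fun i => differentiableAt_pi.1 (hq _) i]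

end TensorLagrangian

theorem IsLoop.apply_add_two_pi {N : ℕ} [NeZero N] {q : ℝ → Fin N → ℝ} (hq : IsLoop q) (t : ℝ) :
    q (t + 2 * π) = q t + Pi.single 0 (2 * π) := by
  ext i
  obtain rfl | hi := eq_or_ne i 0
  · simp [hq.2.1]
  · simp [hq.2.2 t i hi, hi]

/-- The term `-φ(q) q̇` of the variation is an arbitrary infinitesimal reparametrization; `φ = ξ^0`
is the choice that preserves the gauge `q^0(t) = t`. The vector `p` is the displacement of the curve
over one period. -/
theorem S_transformation_law_general {N n : ℕ} {ξ : Fin N → (Fin N → ℝ) → ℝ}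
    (hξ : ∀ μ, ContDiff ℝ 1 (ξ μ)) {φ : (Fin N → ℝ) → ℝ} (hφ : ContDiff ℝ 1 φ)
    {g : (Fin n → Fin N) → (Fin N → ℝ) → ℝ} (hg : ∀ ν, ContDiff ℝ 1 (g ν))
    {p : Fin N → ℝ} (hφp : Function.Periodic φ p) (hgp : ∀ ν, Function.Periodic (g ν) p)
    {Q : ℝ → ℝ → Fin N → ℝ} (hQ : ContDiff ℝ 2 (Function.uncurry Q))
    (hQp : ∀ t, Q 0 (t + 2 * π) = Q 0 t + p)
    (hvar : ∀ t μ, deriv (fun ε => Q ε t μ) 0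
      = ξ μ (Q 0 t) - deriv (fun s => Q 0 s μ) t * φ (Q 0 t)) :
    HasDerivAt (fun ε => Sop n g (Q ε))
      (Sop n (lieDeriv ξ g) (Q 0)
        - ((n : ℂ) - 1) *
            Sop (n + 1) (fun κ x => pd φ (κ 0) x * g (fun l => κ l.succ) x) (Q 0))
      0 := by
  have hQd : Differentiable ℝ (Function.uncurry Q) := hQ.differentiable two_ne_zero
  have hcurve (ε : ℝ) : Differentiable ℝ (Q ε) := fun t =>
    (hasDerivAt_snd_of_differentiableAt_uncurry (hQd (ε, t))).differentiableAt
  have hvar' (t : ℝ) : deriv (fun ε => Q ε t) 0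
      = (fun μ => ξ μ (Q 0 t)) - φ (Q 0 t) • deriv (Q 0) t := by
    have hparam := (hasDerivAt_fst_of_differentiableAt_uncurry (hQd (0, t))).differentiableAt
    ext μ
    simp [deriv_pi (differentiableAt_pi.1 hparam), deriv_pi (differentiableAt_pi.1 (hcurve 0 t)),
      hvar, mul_comm]
  have hboundary : φ (Q 0 (2 * π)) • tensorLagrangian g (tangentLift (Q 0) (2 * π))
      = φ (Q 0 0) • tensorLagrangian g (tangentLift (Q 0) 0) := by
    rw [← zero_add (2 * π), hQp, tangentLift_add_of_quasiperiodic hQp, hφp,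
      periodic_tensorLagrangian hgp]
  have hmain := hasDerivAt_integral_lagrangian_of_variation (contDiff_tensorLagrangian hg)
    (tensorLagrangian_smul g) (contDiff_pi.2 hξ) hφ hQ hvar' 0 (2 * π)
  simp only [hboundary, sub_self, sub_zero, fderiv_tensorLagrangian_completeLift
    (fun ν => (hg ν).differentiable one_ne_zero)
    (fun μ => (hξ μ).differentiable one_ne_zero)] at hmain
  simp only [Sop_eq_integral_tensorLagrangian _ (hcurve _)]
  convert! hmain.ofReal_comp.const_mul (1 / (2 * π * Complex.I)) using 1
  simp only [tangentLift, tensorLagrangian_pd_mul, smul_eq_mul]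
  push_cast
  ring

/-- Transformation law (2.1) of `S_n` in the realization (3.8): along a variation of
loops `q_ε` in the direction of `ξ`,
`(d/dε)|₀ S_n(g)[q_ε] = S_n(ξ^μ∂_μ g + ∑_j ∂_{νⱼ}ξ^μ g_{ν₁…μ…νₙ})[q₀]
  − (n−1) S_{n+1}((∂_μ ξ^0) g)[q₀]`. -/
theorem S_transformation_law (N : ℕ) [NeZero N] (n : ℕ)
    (ξ : Fin N → (Fin N → ℝ) → ℝ) (hξ : ∀ μ, Admissible (ξ μ))
    (g : (Fin n → Fin N) → (Fin N → ℝ) → ℝ) (hg : ∀ ν, Admissible (g ν))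
    (Q : ℝ → ℝ → Fin N → ℝ) (hQ : IsVariation ξ Q) :
    HasDerivAt (fun ε => Sop n g (Q ε))
      (Sop n (fun ν x =>
          (∑ μ, ξ μ x * pd (g ν) μ x)
            + ∑ j, ∑ μ, pd (ξ μ) (ν j) x * g (Function.update ν j μ) x) (Q 0)
        - ((n : ℂ) - 1) *
            Sop (n + 1) (fun κ x => pd (ξ 0) (κ 0) x * g (fun l => κ l.succ) x) (Q 0))
      0 := by
  obtain ⟨hloop, hQ, hvar⟩ := hQ
  exact S_transformation_law_general (fun μ => (hξ μ).1.of_le (by simp)) ((hξ 0).1.of_le (by simp))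
    (fun ν => (hg ν).1.of_le (by simp)) (hξ 0).2 (fun ν => (hg ν).2) (hQ.of_le (by norm_cast))
    (hloop 0).apply_add_two_pi hvar
end

section
/- (Antisymmetry of the extension (A.15).) Fix real constants c, k0, k1, k2 and a loop q. For smooth vector fields ξ, η with admissible components, define ⟨∂²f⟩(t) := q̇^ρ(t) q̇^σ(t)(∂_ρ∂_σ f)(q(t)) for admissible f, and set ext(ξ,η) = (1/2πi) ∫_0^{2π} { (1+k1) (d/dt)[(∂_ν ξ^μ)(q(t))] (∂_μ η^ν)(q(t)) + k2 (d/dt)[(∂_μ ξ^μ)(q(t))] (∂_ν η^ν)(q(t)) + (∂_ν ξ^0)(q(t)) ⟨∂²η^ν⟩(t) − ⟨∂²ξ^μ⟩(t) (∂_μ η^0)(q(t)) − (d/dt)[ξ^0(q(t))] ⟨∂²η^0⟩(t) + ⟨∂²ξ^0⟩(t) (d/dt)[η^0(q(t))] + ((1+k0)/2)( (d/dt)[(∂_μ ξ^μ)(q(t))] (d/dt)[η^0(q(t))] − (d/dt)[ξ^0(q(t))] (d/dt)[(∂_ν η^ν)(q(t))] ) − (2 − (c+2(N−1))/12) (d²/dt²)[ξ^0(q(t))]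 (d/dt)[η^0(q(t))] − ((c+2(N−1))/12) (d/dt)[ξ^0(q(t))] η^0(q(t)) + (i/2)( (∂_μ ξ^μ)(q(t)) (d/dt)[η^0(q(t))] − (d/dt)[ξ^0(q(t))] (∂_ν η^ν)(q(t)) ) } dt, with repeated indices summed over 0,…,N−1. Then for all such ξ, η: ext(η,ξ) = −ext(ξ,η). -/
open Finset Real

/-- The extension (A.15) of Theorem 3.1:
`ext(ξ,η) = (1/2πi) ∫₀^{2π} { (1+k₁) ∂_ν ξ̇^μ ∂_μ η^ν + k₂ ∂_μ ξ̇^μ ∂_ν η^ν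
  + ∂_ν ξ^0 ⟨∂²η^ν⟩ − ⟨∂²ξ^μ⟩ ∂_μ η^0 − ξ̇^0 ⟨∂²η^0⟩ + ⟨∂²ξ^0⟩ η̇^0
  + ((1+k₀)/2)(∂_μ ξ̇^μ η̇^0 − ξ̇^0 ∂_ν η̇^ν) − (2 − (c+2(N−1))/12) ξ̈^0 η̇^0
  − ((c+2(N−1))/12) ξ̇^0 η^0 + (i/2)(∂_μ ξ^μ η̇^0 − ξ̇^0 ∂_ν η^ν) } dt`. -/
noncomputable def extform (N : ℕ) [NeZero N] (c k0 k1 k2 : ℝ) (q : ℝ → Fin N → ℝ)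
    (ξ η : Fin N → (Fin N → ℝ) → ℝ) : ℂ :=
  (1 / (2 * π * Complex.I)) *
    ∫ t in (0:ℝ)..(2 * π),
      (((1 + k1) * ∑ μ, ∑ ν, deriv (fun s => pd (ξ μ) ν (q s)) t * pd (η ν) μ (q t)
        + k2 * deriv (fun s => ∑ μ, pd (ξ μ) μ (q s)) t * ∑ ν, pd (η ν) ν (q t)
        + (∑ ν, pd (ξ 0) ν (q t) * contr2 q (η ν) t)
        - (∑ μ, contr2 q (ξ μ) t * pd (η 0) μ (q t))
        - deriv (fun s => ξ 0 (q s)) t * contr2 q (η 0) t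
        + contr2 q (ξ 0) t * deriv (fun s => η 0 (q s)) t
        + ((1 + k0) / 2) *
            (deriv (fun s => ∑ μ, pd (ξ μ) μ (q s)) t * deriv (fun s => η 0 (q s)) t
              - deriv (fun s => ξ 0 (q s)) t * deriv (fun s => ∑ ν, pd (η ν) ν (q s)) t)
        - (2 - (c + 2 * ((N : ℝ) - 1)) / 12) *
            deriv (deriv (fun s => ξ 0 (q s))) t * deriv (fun s => η 0 (q s)) t
        - ((c + 2 * ((N : ℝ) - 1)) / 12) *
            deriv (fun s => ξ 0 (q s)) t * η 0 (q t) : ℝ) : ℂ)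
      + (Complex.I / 2) *
          (((∑ μ, pd (ξ μ) μ (q t)) * deriv (fun s => η 0 (q s)) t
            - deriv (fun s => ξ 0 (q s)) t * ∑ ν, pd (η ν) ν (q t) : ℝ) : ℂ)

/-! The integrand of `extform` is `E(ξ,η) + χ(ξ,η) − χ(η,ξ)`. Each term of `E(ξ,η)` has the form
`β(u̇, v)` for a symmetric bilinear `β`, where `u` and `v` are the same expression in `ξ` and in `η`
along the loop. Hence `E(ξ,η) + E(η,ξ)` is the derivative of the sum of the `β(u, v)`, which is
periodic in `t`, and the integral of the symmetrised integrand over a period vanishes. -/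

section OneVariable

lemma periodic_deriv {𝕜 F : Type*} [NontriviallyNormedField 𝕜] [NormedAddCommGroup F]
    [NormedSpace 𝕜 F] {f : 𝕜 → F} {T : 𝕜} (hf : Function.Periodic f T) :
    Function.Periodic (deriv f) T := fun t => by
  rw [← deriv_comp_add_const, hf.funext]

lemma integral_eq_neg_of_hasDerivAt_add {E : Type*} [NormedAddCommGroup E] [NormedSpace ℝ E]
    [CompleteSpace E] {f g F : ℝ → E} {a b : ℝ} (hf : IntervalIntegrable f MeasureTheory.volume a b)
    (hg : IntervalIntegrable g MeasureTheory.volume a b)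
    (hF : ∀ t ∈ Set.uIcc a b, HasDerivAt F (f t + g t) t) (hab : F b = F a) :
    ∫ t in a..b, f t = -∫ t in a..b, g t := by
  rw [eq_neg_iff_add_eq_zero, ← intervalIntegral.integral_add hf hg, ← sub_eq_zero.2 hab]
  exact intervalIntegral.integral_eq_sub_of_hasDerivAt hF (hf.add hg)

variable {𝕜 𝔸 ι : Type*} [NontriviallyNormedField 𝕜] [NormedCommRing 𝔸] [NormedAlgebra 𝕜 𝔸] {t : 𝕜}

lemma hasDerivAt_mul_symm {u v : 𝕜 → 𝔸} (hu : DifferentiableAt 𝕜 u t)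
    (hv : DifferentiableAt 𝕜 v t) :
    HasDerivAt (fun s => u s * v s) (deriv u t * v t + deriv v t * u t) t :=
  (hu.hasDerivAt.fun_mul hv.hasDerivAt).congr_deriv (by rw [mul_comm (u t)])

lemma hasDerivAt_trace_mul [Fintype ι] {A B : ι → ι → 𝕜 → 𝔸}
    (hA : ∀ i j, DifferentiableAt 𝕜 (A i j) t) (hB : ∀ i j, DifferentiableAt 𝕜 (B i j) t) :
    HasDerivAt (fun s => ∑ i, ∑ j, A i j s * B j i s)
      (∑ i, ∑ j, deriv (A i j) t * B j i t + ∑ i, ∑ j, deriv (B i j) t * A j i t) t := by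
  rw [Finset.sum_comm (f := fun i j => deriv (B i j) t * A j i t)]
  simp only [← Finset.sum_add_distrib]
  exact HasDerivAt.fun_sum fun i _ => HasDerivAt.fun_sum fun j _ =>
    hasDerivAt_mul_symm (hA i j) (hB j i)

end OneVariable

section Fields

variable {N : ℕ} {f : (Fin N → ℝ) → ℝ} {ξ : Fin N → (Fin N → ℝ) → ℝ} {v : Fin N → ℝ}

/-- The divergence `∂_μ ξ^μ` of a vector field. -/
noncomputable def divergence (ξ : Fin N → (Fin N → ℝ) → ℝ) (x : Fin N → ℝ) : ℝ :=
  ∑ μ, pd (ξ μ) μ x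

lemma contDiff_pd {m n : WithTop ℕ∞} (hf : ContDiff ℝ n f) (hmn : m + 1 ≤ n) (μ : Fin N) :
    ContDiff ℝ m (pd f μ) :=
  (hf.fderiv_right hmn).clm_apply contDiff_const

lemma contDiff_divergence {m n : WithTop ℕ∞} (hξ : ∀ μ, ContDiff ℝ n (ξ μ)) (hmn : m + 1 ≤ n) :
    ContDiff ℝ m (divergence ξ) :=
  ContDiff.sum fun μ _ => contDiff_pd (hξ μ) hmn μ

lemma periodic_pd (hf : Function.Periodic f v) (μ : Fin N) : Function.Periodic (pd f μ) v :=
  fun x => by rw [pd, ← fderiv_comp_add_right, hf.funext, pd]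

lemma periodic_divergence (hξ : ∀ μ, Function.Periodic (ξ μ) v) :
    Function.Periodic (divergence ξ) v :=
  fun x => Finset.sum_congr rfl fun μ _ => periodic_pd (hξ μ) μ x

end Fields

section Loops

variable {N : ℕ} {q : ℝ → Fin N → ℝ} {f : (Fin N → ℝ) → ℝ}

lemma periodic_comp_of_add_eq {α β γ : Type*} [Add α] [Add β] {p : α → β} {g : β → γ} {T : α}
    {v : β} (hg : Function.Periodic g v) (hp : ∀ t, p (t + T) = p t + v) :
    Function.Periodic (g ∘ p) T := fun t => by
  rw [Function.comp_apply, hp, hg, Function.comp_apply]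

lemma IsLoop.add_two_pi [NeZero N] (hq : IsLoop q) (t : ℝ) :
    q (t + 2 * π) = q t + Pi.single 0 (2 * π) := by
  obtain ⟨-, hq_time, hq_space⟩ := hq
  funext i
  obtain rfl | hi := eq_or_ne i 0
  · simp [hq_time]
  · simp [hq_space t i hi, hi]

lemma contDiff_one_pd_comp (hq : ContDiff ℝ 1 q) (hf : ContDiff ℝ 2 f) (μ : Fin N) :
    ContDiff ℝ 1 (pd f μ ∘ q) :=
  (contDiff_pd hf one_add_one_eq_two.le μ).comp hq

lemma contDiff_one_divergence_comp {ξ : Fin N → (Fin N → ℝ) → ℝ} (hq : ContDiff ℝ 1 q)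
    (hξ : ∀ μ, ContDiff ℝ 2 (ξ μ)) : ContDiff ℝ 1 (divergence ξ ∘ q) :=
  (contDiff_divergence hξ one_add_one_eq_two.le).comp hq

lemma continuous_contr2 (hq : ContDiff ℝ 1 q) (hf : ContDiff ℝ 2 f) : Continuous (contr2 q f) := by
  have hq_deriv ρ : Continuous (deriv fun s => q s ρ) :=
    (contDiff_pi.1 hq ρ).continuous_deriv le_rfl
  have hf_pd2 ρ σ : Continuous (pd2 f ρ σ) :=
    (contDiff_pd (m := 0) (contDiff_pd hf one_add_one_eq_two.le σ) (zero_add 1).le ρ).continuous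
  exact continuous_finsetSum _ fun ρ _ => continuous_finsetSum _ fun σ _ =>
    ((hq_deriv ρ).mul (hq_deriv σ)).mul ((hf_pd2 ρ σ).comp hq.continuous)

end Loops

section Extension

variable {N : ℕ} [NeZero N] {q : ℝ → Fin N → ℝ} {ξ η : Fin N → (Fin N → ℝ) → ℝ}

/-- The terms `E(ξ,η)` of the integrand of `extform` that become antisymmetric only after
integration by parts, with `κ` standing for the coefficient `(c + 2(N−1))/12`. -/
noncomputable def extExact (k1 k2 κ : ℝ) (q : ℝ → Fin N → ℝ)
    (ξ η : Fin N → (Fin N → ℝ) → ℝ) (t : ℝ) : ℝ :=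
  (1 + k1) * ∑ μ, ∑ ν, deriv (pd (ξ μ) ν ∘ q) t * pd (η ν) μ (q t)
    + k2 * (deriv (divergence ξ ∘ q) t * divergence η (q t))
    - (2 - κ) * (deriv (deriv (ξ 0 ∘ q)) t * deriv (η 0 ∘ q) t)
    - κ * (deriv (ξ 0 ∘ q) t * η 0 (q t))

/-- A primitive of the symmetrisation `E(ξ,η) + E(η,ξ)` of `extExact`. -/
noncomputable def extPrimitive (k1 k2 κ : ℝ) (q : ℝ → Fin N → ℝ)
    (ξ η : Fin N → (Fin N → ℝ) → ℝ) (t : ℝ) : ℝ :=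
  (1 + k1) * ∑ μ, ∑ ν, pd (ξ μ) ν (q t) * pd (η ν) μ (q t)
    + k2 * (divergence ξ (q t) * divergence η (q t))
    - (2 - κ) * (deriv (ξ 0 ∘ q) t * deriv (η 0 ∘ q) t)
    - κ * (ξ 0 (q t) * η 0 (q t))

/-- One half `χ(ξ,η)` of the pointwise antisymmetric terms `χ(ξ,η) − χ(η,ξ)` of the integrand of
`extform`. -/
noncomputable def extHalf (k0 : ℝ) (q : ℝ → Fin N → ℝ)
    (ξ η : Fin N → (Fin N → ℝ) → ℝ) (t : ℝ) : ℂ :=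
  (∑ ν, pd (ξ 0) ν (q t) * contr2 q (η ν) t + contr2 q (ξ 0) t * deriv (η 0 ∘ q) t
      + (1 + k0) / 2 * (deriv (divergence ξ ∘ q) t * deriv (η 0 ∘ q) t) : ℝ)
    + Complex.I / 2 * (divergence ξ (q t) * deriv (η 0 ∘ q) t : ℝ)

/-- The integrand of `extform`, split as `E(ξ,η) + (χ(ξ,η) − χ(η,ξ))`. -/
noncomputable def extDensity (k0 k1 k2 κ : ℝ) (q : ℝ → Fin N → ℝ)
    (ξ η : Fin N → (Fin N → ℝ) → ℝ) (t : ℝ) : ℂ :=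
  extExact k1 k2 κ q ξ η t + (extHalf k0 q ξ η t - extHalf k0 q η ξ t)

lemma extform_eq_integral_extDensity (c k0 k1 k2 : ℝ) (q : ℝ → Fin N → ℝ)
    (ξ η : Fin N → (Fin N → ℝ) → ℝ) :
    extform N c k0 k1 k2 q ξ η = 1 / (2 * π * Complex.I) *
      ∫ t in (0 : ℝ)..(2 * π), extDensity k0 k1 k2 ((c + 2 * ((N : ℝ) - 1)) / 12) q ξ η t := by
  unfold extform
  congr 2 with t
  simp only [extDensity, extExact, extHalf, divergence, Function.comp_def,
    mul_comm (contr2 q _ t) (pd _ _ _)]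
  push_cast
  ring

lemma hasDerivAt_extPrimitive (k1 k2 κ : ℝ) (hq : ContDiff ℝ 2 q)
    (hξ : ∀ μ, ContDiff ℝ 2 (ξ μ)) (hη : ∀ μ, ContDiff ℝ 2 (η μ)) (t : ℝ) :
    HasDerivAt (extPrimitive k1 k2 κ q ξ η)
      (extExact k1 k2 κ q ξ η t + extExact k1 k2 κ q η ξ t) t := by
  have hq_one := hq.of_le one_le_two
  have hpd {f : (Fin N → ℝ) → ℝ} (hf : ContDiff ℝ 2 f) ν : DifferentiableAt ℝ (pd f ν ∘ q) t :=
    (contDiff_one_pd_comp hq_one hf ν).differentiable one_ne_zero t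
  have hdiv {ζ : Fin N → (Fin N → ℝ) → ℝ} (hζ : ∀ μ, ContDiff ℝ 2 (ζ μ)) :
      DifferentiableAt ℝ (divergence ζ ∘ q) t :=
    (contDiff_one_divergence_comp hq_one hζ).differentiable one_ne_zero t
  have hξ_time := (hξ 0).comp hq
  have hη_time := (hη 0).comp hq
  have gradient := hasDerivAt_trace_mul (fun μ ν => hpd (hξ μ) ν) fun μ ν => hpd (hη μ) ν
  have divergences := hasDerivAt_mul_symm (hdiv hξ) (hdiv hη)
  have velocities := hasDerivAt_mul_symm (hξ_time.differentiable_deriv_two t)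
    (hη_time.differentiable_deriv_two t)
  have times := hasDerivAt_mul_symm (hξ_time.differentiable two_ne_zero t)
    (hη_time.differentiable two_ne_zero t)
  refine ((((gradient.const_mul (1 + k1)).add (divergences.const_mul k2)).sub
    (velocities.const_mul (2 - κ))).sub (times.const_mul κ)).congr_deriv ?_
  simp only [extExact, Function.comp_apply]
  ring

lemma periodic_extPrimitive (k1 k2 κ : ℝ) {T : ℝ} {v : Fin N → ℝ}
    (hq : ∀ t, q (t + T) = q t + v) (hξ : ∀ μ, Function.Periodic (ξ μ) v)
    (hη : ∀ μ, Function.Periodic (η μ) v) :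
    Function.Periodic (extPrimitive k1 k2 κ q ξ η) T := fun t => by
  have hξ_deriv := periodic_deriv (periodic_comp_of_add_eq (hξ 0) hq) t
  have hη_deriv := periodic_deriv (periodic_comp_of_add_eq (hη 0) hq) t
  simp only [extPrimitive, hq, hξ_deriv, hη_deriv, hξ 0 _, hη 0 _, periodic_divergence hξ _,
    periodic_divergence hη _, periodic_pd (hξ _) _ _, periodic_pd (hη _) _ _]

lemma continuous_extExact (k1 k2 κ : ℝ) (hq : ContDiff ℝ 2 q)
    (hξ : ∀ μ, ContDiff ℝ 2 (ξ μ)) (hη : ∀ μ, ContDiff ℝ 2 (η μ)) :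
    Continuous (extExact k1 k2 κ q ξ η) := by
  have hq_one := hq.of_le one_le_two
  have hξ_pd μ ν := contDiff_one_pd_comp hq_one (hξ μ) ν
  have hη_pd μ ν := contDiff_one_pd_comp hq_one (hη μ) ν
  have hξ_div := contDiff_one_divergence_comp hq_one hξ
  have hη_div := contDiff_one_divergence_comp hq_one hη
  have hξ_time := (hξ 0).comp hq
  have hη_time := (hη 0).comp hq
  have trace : Continuous fun t => ∑ μ, ∑ ν, deriv (pd (ξ μ) ν ∘ q) t * pd (η ν) μ (q t) :=
    continuous_finsetSum _ fun μ _ => continuous_finsetSum _ fun ν _ =>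
      (hξ_pd μ ν).continuous_deriv_one.mul (hη_pd ν μ).continuous
  exact (((trace.const_mul _).add
    ((hξ_div.continuous_deriv_one.mul hη_div.continuous).const_mul _)).sub
    ((hξ_time.deriv'.continuous_deriv_one.mul
      (hη_time.continuous_deriv one_le_two)).const_mul _)).sub
    (((hξ_time.continuous_deriv one_le_two).mul hη_time.continuous).const_mul _)

lemma continuous_extHalf (k0 : ℝ) (hq : ContDiff ℝ 1 q)
    (hξ : ∀ μ, ContDiff ℝ 2 (ξ μ)) (hη : ∀ μ, ContDiff ℝ 2 (η μ)) :
    Continuous (extHalf k0 q ξ η) := by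
  have hξ_div := contDiff_one_divergence_comp hq hξ
  have hη_time : Continuous (deriv (η 0 ∘ q)) :=
    (((hη 0).of_le one_le_two).comp hq).continuous_deriv_one
  have contraction : Continuous fun t => ∑ ν, pd (ξ 0) ν (q t) * contr2 q (η ν) t :=
    continuous_finsetSum _ fun ν _ =>
      (contDiff_one_pd_comp hq (hξ 0) ν).continuous.mul (continuous_contr2 hq (hη ν))
  exact (Complex.continuous_ofReal.comp
    ((contraction.add ((continuous_contr2 hq (hξ 0)).mul hη_time)).add
      ((hξ_div.continuous_deriv_one.mul hη_time).const_mul _))).add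
    ((Complex.continuous_ofReal.comp (hξ_div.continuous.mul hη_time)).const_mul _)

lemma continuous_extDensity (k0 k1 k2 κ : ℝ) (hq : ContDiff ℝ 2 q)
    (hξ : ∀ μ, ContDiff ℝ 2 (ξ μ)) (hη : ∀ μ, ContDiff ℝ 2 (η μ)) :
    Continuous (extDensity k0 k1 k2 κ q ξ η) :=
  (Complex.continuous_ofReal.comp (continuous_extExact k1 k2 κ hq hξ hη)).add
    ((continuous_extHalf k0 (hq.of_le one_le_two) hξ hη).sub
      (continuous_extHalf k0 (hq.of_le one_le_two) hη hξ))

lemma hasDerivAt_ofReal_extPrimitive (k0 k1 k2 κ : ℝ) (hq : ContDiff ℝ 2 q)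
    (hξ : ∀ μ, ContDiff ℝ 2 (ξ μ)) (hη : ∀ μ, ContDiff ℝ 2 (η μ)) (t : ℝ) :
    HasDerivAt (fun s => (extPrimitive k1 k2 κ q ξ η s : ℂ))
      (extDensity k0 k1 k2 κ q ξ η t + extDensity k0 k1 k2 κ q η ξ t) t := by
  refine (hasDerivAt_extPrimitive k1 k2 κ hq hξ hη t).ofReal_comp.congr_deriv ?_
  simp only [extDensity, Complex.ofReal_add]
  ring

theorem extform_antisymm_general (N : ℕ) [NeZero N] (c k0 k1 k2 : ℝ) (q : ℝ → Fin N → ℝ)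
    (v : Fin N → ℝ) (hq : ContDiff ℝ 2 q) (hqv : ∀ t, q (t + 2 * π) = q t + v)
    (ξ η : Fin N → (Fin N → ℝ) → ℝ)
    (hξ : ∀ μ, ContDiff ℝ 2 (ξ μ)) (hξv : ∀ μ, Function.Periodic (ξ μ) v)
    (hη : ∀ μ, ContDiff ℝ 2 (η μ)) (hηv : ∀ μ, Function.Periodic (η μ) v) :
    extform N c k0 k1 k2 q η ξ = -extform N c k0 k1 k2 q ξ η := by
  rw [extform_eq_integral_extDensity, extform_eq_integral_extDensity, ← mul_neg]
  congr 1
  exact integral_eq_neg_of_hasDerivAt_add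
    ((continuous_extDensity k0 k1 k2 _ hq hη hξ).intervalIntegrable _ _)
    ((continuous_extDensity k0 k1 k2 _ hq hξ hη).intervalIntegrable _ _)
    (fun t _ => hasDerivAt_ofReal_extPrimitive k0 k1 k2 _ hq hη hξ t)
    (congrArg _ (periodic_extPrimitive k1 k2 _ hqv hηv hξv).eq)

end Extension

/-- Antisymmetry of the extension (A.15): `ext(η,ξ) = −ext(ξ,η)`. -/
theorem extform_antisymm (N : ℕ) [NeZero N] (c k0 k1 k2 : ℝ)
    (q : ℝ → Fin N → ℝ) (hq : IsLoop q)
    (ξ η : Fin N → (Fin N → ℝ) → ℝ)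
    (hξ : ∀ μ, Admissible (ξ μ)) (hη : ∀ μ, Admissible (η μ)) :
    extform N c k0 k1 k2 q η ξ = - extform N c k0 k1 k2 q ξ η :=
  extform_antisymm_general N c k0 k1 k2 q _ (contDiff_infty.1 hq.1 2) hq.add_two_pi ξ η
    (fun μ => contDiff_infty.1 (hξ μ).1 2) (fun μ => (hξ μ).2)
    (fun μ => contDiff_infty.1 (hη μ).1 2) (fun μ => (hη μ).2)
end

section
/- (The algebra Vir ⋉̃_{k0} ĝl(N)_{k1,k2} of eq. (3.7) is a Lie algebra.) For all real constants c, k0, k1, k2, the bilinear bracket on the real vector space W ⊕ L gl(N) ⊕ ℝC defined by [L_m, L_n] = (m−n) L_{m+n} + (c/12)(m³−m) δ_{m+n,0} C; [L_m, X(n)] = −[X(n), L_m] = −n X(m+n) + (k0/2) m² δ_{m+n,0} tr(X) C; [X(m), Y(n)] = [X,Y](m+n) + m δ_{m+n,0} ( k1 tr(XY) + k2 tr(X) tr(Y) ) C; [C, ·] = 0; is antisymmetric and satisfies the Jacobi identity, i.e. it makes W ⊕ L gl(N) ⊕ ℝC a Lie algebra over ℝ. -/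
/-- The underlying vector space `W ⊕ L gl(N) ⊕ ℝC` of the extended algebra
`Vir ⋉̃_{k₀} ĝl(N)_{k₁,k₂}`: a Witt part (finitely supported coefficients of the
`L_m`), a loop-algebra part (finitely supported `gl(N)`-valued coefficients of the
modes `X(m) = X ⊗ tᵐ`), and the central line `ℝC`. -/
abbrev VirGl (N : ℕ) : Type :=
  (ℤ →₀ ℝ) × (ℤ →₀ Matrix (Fin N) (Fin N) ℝ) × ℝ

/-- The bracket of eq. (3.7), defined bilinearly by
`[L_m, L_n] = (m−n) L_{m+n} + (c/12)(m³−m) δ_{m+n,0} C`,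
`[L_m, X(n)] = −n X(m+n) + (k₀/2) m² δ_{m+n,0} tr(X) C`,
`[X(m), Y(n)] = (XY−YX)(m+n) + m δ_{m+n,0} (k₁ tr(XY) + k₂ tr(X)tr(Y)) C`,
`[C, ·] = 0`. -/
noncomputable def virGlBracket (N : ℕ) (c k0 k1 k2 : ℝ) (x y : VirGl N) : VirGl N :=
  ⟨x.1.sum fun m a => y.1.sum fun n b =>
      Finsupp.single (m + n) (a * b * ((m : ℝ) - (n : ℝ))),
   (x.1.sum fun m a => y.2.1.sum fun n X =>
        Finsupp.single (m + n) ((a * (-(n : ℝ))) • X))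
    + (x.2.1.sum fun m X => y.1.sum fun n b =>
        Finsupp.single (m + n) ((b * (m : ℝ)) • X))
    + (x.2.1.sum fun m X => y.2.1.sum fun n Y =>
        Finsupp.single (m + n) (X * Y - Y * X)),
   (x.1.sum fun m a => a * y.1 (-m) * (c / 12) * ((m : ℝ) ^ 3 - (m : ℝ)))
    + ((x.1.sum fun m a => a * (k0 / 2) * (m : ℝ) ^ 2 * (y.2.1 (-m)).trace)
        - (y.1.sum fun n b => b * (k0 / 2) * (n : ℝ) ^ 2 * (x.2.1 (-n)).trace))
    + (x.2.1.sum fun m X =>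
        (m : ℝ) * (k1 * (X * y.2.1 (-m)).trace + k2 * X.trace * (y.2.1 (-m)).trace))⟩

/-!
Write `f` for the vector field `-f D` and `F` for a Lie algebra-valued current, where `D = t d/dt`
on `ℝ[t, t⁻¹]`; vector fields act on currents, giving a semidirect sum. The central terms of the
bracket are residues
`Res ((D³f - Df) g)`, `Res (D²f · τ(G)) - Res (D²g · τ(F))`, `Res κ(DF, G)`,
with `τ` a linear form vanishing on commutators and `κ` an invariant symmetric form. Since `Res`
kills total derivatives one may integrate by parts, and the cyclic sum of each of the three turns
out to be the residue of a total derivative. So they are 2-cocycles, and the bracket of eq. (3.7)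
is the Lie bracket of the central extension they define, read off in Fourier modes.
-/

noncomputable section

open scoped TensorProduct
open LieModule.Cohomology
open Lie.Derivation (ofDerivation)
open Module (Dual)

/-! ### The semidirect sum of vector fields and currents -/

section Witt

variable {R A : Type*} [CommRing R] [CommRing A] [Algebra R A] (D : Derivation R A A)

/-- The Lie algebra of vector fields on `Spec A` that are multiples of `D`. It is a copy of `A` in
which `f` stands for `-f D`; the sign makes `tᵐ` the Witt generator `L_m` when `D = t d/dt`. -/
def WittAlgebra (_ : Derivation R A A) : Type _ := A

namespace WittAlgebra

instance : AddCommGroup (WittAlgebra D) := inferInstanceAs (AddCommGroup A)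

instance : Module R (WittAlgebra D) := inferInstanceAs (Module R A)

/-- The coefficient `f` of the vector field `-f D`. -/
def equiv : WittAlgebra D ≃ₗ[R] A := LinearEquiv.refl R A

instance : Bracket (WittAlgebra D) (WittAlgebra D) where
  bracket f g := (equiv D).symm (D (equiv D f) * equiv D g - equiv D f * D (equiv D g))

@[simp]
theorem equiv_lie (f g : WittAlgebra D) :
    equiv D ⁅f, g⁆ = D (equiv D f) * equiv D g - equiv D f * D (equiv D g) :=
  rfl

instance : LieRing (WittAlgebra D) where
  add_lie f g h := (equiv D).injective <| by simp only [equiv_lie, map_add]; ring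
  lie_add f g h := (equiv D).injective <| by simp only [equiv_lie, map_add]; ring
  lie_self f := (equiv D).injective <| by simp only [equiv_lie, map_zero]; ring
  leibniz_lie f g h := (equiv D).injective <| by
    simp only [equiv_lie, map_add, map_sub, Derivation.leibniz, smul_eq_mul]; ring

instance : LieAlgebra R (WittAlgebra D) where
  lie_smul r f g := (equiv D).injective <| by simp [smul_sub]

end WittAlgebra

variable (L : Type*) [LieRing L] [LieAlgebra R L]

variable {L} in
theorem ofDerivation_smul (a : A) (x : A ⊗[R] L) :
    ofDerivation L D (a • x) = D a • x + a • ofDerivation L D x := by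
  induction x with
  | zero => simp
  | tmul b X => simp [TensorProduct.smul_tmul', ← TensorProduct.add_tmul, add_comm, mul_comm]
  | add x y hx hy => simp only [smul_add, map_add, hx, hy]; abel

/-- The action of the vector field `-f D` on the currents `A ⊗ L` by differentiating the
`A`-coefficients. -/
def WittAlgebra.action : WittAlgebra D →ₗ⁅R⁆ LieDerivation R (A ⊗[R] L) (A ⊗[R] L) where
  toFun f := -(WittAlgebra.equiv D f • ofDerivation L D)
  map_add' f g := by simp [add_smul, add_comm]
  map_smul' r f := by ext; simp
  map_lie' {f g} := by
    ext x
    simp only [LieDerivation.lie_apply, LieDerivation.neg_apply, LieDerivation.smul_apply, map_neg,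
      ofDerivation_smul, WittAlgebra.equiv_lie]
    module

variable {L} in
@[simp]
theorem WittAlgebra.action_apply (f : WittAlgebra D) (x : A ⊗[R] L) :
    WittAlgebra.action D L f x = -(WittAlgebra.equiv D f • ofDerivation L D x) :=
  rfl

/-- The semidirect sum of the currents `A ⊗ L` and the vector fields `A D`. -/
abbrev WittCurrentAlgebra := (A ⊗[R] L) ⋊⁅WittAlgebra.action D L⁆ WittAlgebra D

namespace WittCurrentAlgebra

variable {L}

/-- The coefficient `f` of the vector field component `-f D`. -/
def vectorField : WittCurrentAlgebra D L →ₗ[R] A :=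
  (WittAlgebra.equiv D).toLinearMap ∘ₗ
    (LieAlgebra.SemiDirectSum.projr (WittAlgebra.action D L)).toLinearMap

/-- The component of an element in the currents `A ⊗ L`. -/
def current : WittCurrentAlgebra D L →ₗ[R] A ⊗[R] L :=
  LieAlgebra.SemiDirectSum.projl (WittAlgebra.action D L)

theorem vectorField_lie (x y : WittCurrentAlgebra D L) :
    vectorField D ⁅x, y⁆ =
      D (vectorField D x) * vectorField D y - vectorField D x * D (vectorField D y) :=
  rfl

theorem current_lie (x y : WittCurrentAlgebra D L) :
    current D ⁅x, y⁆ = ⁅current D x, current D y⁆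
      - vectorField D x • ofDerivation L D (current D y)
      + vectorField D y • ofDerivation L D (current D x) := by
  rw [← sub_neg_eq_add, sub_eq_add_neg ⁅_, _⁆]
  rfl

end WittCurrentAlgebra

end Witt

/-! ### Extending linear and bilinear forms to currents -/

section BaseChange

variable {R A V L : Type*} [CommRing R] [CommRing A] [Algebra R A] [AddCommGroup V] [Module R V]
  [LieRing L] [LieAlgebra R L] (D : Derivation R A A)

theorem bilinFormBaseChange_tmul_left (κ : LinearMap.BilinForm R V) (a : A) (X : V)
    (y : A ⊗[R] V) : κ.baseChange A (a ⊗ₜ X) y = a * Dual.baseChange A (κ X) y := by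
  induction y with
  | zero => simp
  | add y y' hy hy' => rw [map_add, map_add, hy, hy', mul_add]
  | tmul b Y => simp

theorem bilinFormBaseChange_comm {κ : LinearMap.BilinForm R V} (symm : κ.IsSymm)
    (x y : A ⊗[R] V) : κ.baseChange A x y = κ.baseChange A y x :=
  (LinearMap.BilinForm.IsSymm.baseChange A (LinearMap.BilinForm.isSymm_iff.mp symm)).eq x y

theorem dualBaseChange_ofDerivation (τ : Dual R L) (x : A ⊗[R] L) :
    τ.baseChange A (ofDerivation L D x) = D (τ.baseChange A x) := by
  induction x with
  | zero => simp
  | tmul a X => simp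
  | add x y hx hy => simp only [map_add, hx, hy]

theorem dualBaseChange_lie {τ : Dual R L} (hτ : ∀ X Y : L, τ ⁅X, Y⁆ = 0) (x y : A ⊗[R] L) :
    τ.baseChange A ⁅x, y⁆ = 0 := by
  induction x with
  | zero => simp
  | add x x' hx hx' => simp only [add_lie, map_add, hx, hx', add_zero]
  | tmul a X =>
    induction y with
    | zero => simp
    | add y y' hy hy' => simp only [lie_add, map_add, hy, hy', add_zero]
    | tmul b Y => simp [hτ]

theorem bilinFormBaseChange_lieInvariant {κ : LinearMap.BilinForm R L}
    (inv : κ.lieInvariant L) : (κ.baseChange A).lieInvariant (A ⊗[R] L) := by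
  intro x y z
  induction x with
  | zero => simp
  | add x x' hx hx' => simp only [add_lie, map_add, LinearMap.add_apply, hx, hx']; abel
  | tmul a X =>
    induction y with
    | zero => simp
    | add y y' hy hy' => simp only [lie_add, map_add, LinearMap.add_apply, hy, hy']; abel
    | tmul b Y =>
      induction z with
      | zero => simp
      | add z z' hz hz' => simp only [lie_add, map_add, hz, hz']; abel
      | tmul c Z => simp [inv X Y Z, mul_assoc, mul_left_comm]

theorem derivation_bilinFormBaseChange (κ : LinearMap.BilinForm R L) (x y : A ⊗[R] L) :
    D (κ.baseChange A x y) =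
      κ.baseChange A (ofDerivation L D x) y + κ.baseChange A x (ofDerivation L D y) := by
  induction x with
  | zero => simp
  | add x x' hx hx' => simp only [map_add, LinearMap.add_apply, hx, hx']; abel
  | tmul a X =>
    induction y with
    | zero => simp
    | add y y' hy hy' => simp only [map_add, hy, hy']; abel
    | tmul b Y => simp [add_comm, mul_comm]

theorem derivation_bilinFormBaseChange_lie {κ : LinearMap.BilinForm R L} (symm : κ.IsSymm)
    (inv : κ.lieInvariant L) (x y z : A ⊗[R] L) :
    D (κ.baseChange A ⁅x, y⁆ z) = κ.baseChange A ⁅x, y⁆ (ofDerivation L D z)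
      + κ.baseChange A ⁅y, z⁆ (ofDerivation L D x)
      + κ.baseChange A ⁅z, x⁆ (ofDerivation L D y) := by
  have cyclic (u v w : A ⊗[R] L) : κ.baseChange A ⁅u, v⁆ w = κ.baseChange A ⁅v, w⁆ u := by
    rw [← lie_skew, map_neg, LinearMap.neg_apply, bilinFormBaseChange_lieInvariant inv, neg_neg,
      bilinFormBaseChange_comm symm]
  rw [derivation_bilinFormBaseChange, LieDerivation.apply_lie_eq_add, map_add,
    LinearMap.add_apply, cyclic (ofDerivation L D x), cyclic x, cyclic (ofDerivation L D y)]
  ring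

end BaseChange

/-! ### The three cocycles -/

section ScalarCocycle

variable {R S : Type*} [CommRing R] [IsAddTorsionFree R] [LieRing S] [LieAlgebra R S]

/-- The 2-cocycle with trivial coefficients given by a skew bilinear form satisfying the cyclic
identity. -/
def scalarTwoCocycle (B : LinearMap.BilinForm R S) (skew : ∀ x y, B x y + B y x = 0)
    (jacobi : ∀ x y z, B ⁅x, y⁆ z + B ⁅y, z⁆ x + B ⁅z, x⁆ y = 0) :
    twoCocycle R S (TrivialLieModule R S R) where
  val := ⟨B.compr₂ (TrivialLieModule.equiv R S R).symm.toLinearMap, fun x ↦ by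
    simpa using self_eq_neg.mp (eq_neg_of_add_eq_zero_left (skew x x))⟩
  property := by
    rw [mem_twoCocycle_iff_of_trivial]
    intro x y z
    apply (TrivialLieModule.equiv R S R).injective
    change B x ⁅y, z⁆ = B ⁅x, y⁆ z + B y ⁅x, z⁆
    have lie_right : B y ⁅x, z⁆ = -B y ⁅z, x⁆ := by rw [← lie_skew, map_neg]
    linear_combination skew x ⁅y, z⁆ - jacobi x y z - lie_right + skew y ⁅z, x⁆

end ScalarCocycle

namespace WittCurrentAlgebra

variable {R A : Type*} [CommRing R] [CommRing A] [Algebra R A] (D : Derivation R A A)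

section Forms

variable (L : Type*) [LieRing L] [LieAlgebra R L] (ρ : A →ₗ[R] R)

/-- The Gelfand–Fuchs form `(f, g) ↦ ρ ((D³f - Df) g)` on vector fields, whose cocycle defines the
Virasoro algebra when `ρ` is the residue. -/
def gelfandFuchsForm : LinearMap.BilinForm R (WittCurrentAlgebra D L) :=
  ((LinearMap.mul R A).compr₂ ρ).compl₁₂
    (((D : A →ₗ[R] A) ^ 3 - (D : A →ₗ[R] A)) ∘ₗ vectorField D) (vectorField D)

variable {L}

theorem gelfandFuchsForm_apply (x y : WittCurrentAlgebra D L) :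
    gelfandFuchsForm D L ρ x y =
      ρ ((D (D (D (vectorField D x))) - D (vectorField D x)) * vectorField D y) :=
  rfl

/-- The form pairing vector fields with currents through a linear form `τ`: it sends
`(f, G)` to `ρ (D²f · τ(G))` and is skew. -/
def twistForm (τ : Dual R L) : LinearMap.BilinForm R (WittCurrentAlgebra D L) :=
  let B := ((LinearMap.mul R A).compr₂ ρ).compl₁₂ (((D : A →ₗ[R] A) ^ 2) ∘ₗ vectorField D)
    ((τ.baseChange A).restrictScalars R ∘ₗ current D)
  B - B.flip

theorem twistForm_apply (τ : Dual R L) (x y : WittCurrentAlgebra D L) :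
    twistForm D ρ τ x y = ρ (D (D (vectorField D x)) * τ.baseChange A (current D y))
      - ρ (D (D (vectorField D y)) * τ.baseChange A (current D x)) :=
  rfl

/-- The form `(F, G) ↦ ρ (κ(DF, G))` on currents, whose cocycle defines the affine Lie algebra of
`κ` when `ρ` is the residue. -/
def affineForm (κ : LinearMap.BilinForm R L) :
    LinearMap.BilinForm R (WittCurrentAlgebra D L) :=
  (((κ.baseChange A).restrictScalars₁₂ R R).compr₂ ρ).compl₁₂
    ((ofDerivation L D).toLinearMap ∘ₗ current D) (current D)

theorem affineForm_apply (κ : LinearMap.BilinForm R L) (x y : WittCurrentAlgebra D L) :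
    affineForm D ρ κ x y = ρ (κ.baseChange A (ofDerivation L D (current D x)) (current D y)) :=
  rfl

theorem twistForm_skew (τ : Dual R L) (x y : WittCurrentAlgebra D L) :
    twistForm D ρ τ x y + twistForm D ρ τ y x = 0 := by
  rw [twistForm_apply, twistForm_apply, sub_add_sub_cancel, sub_self]

end Forms

section Cocycles

variable {L : Type*} [LieRing L] [LieAlgebra R L]
variable {D} {ρ : A →ₗ[R] R} (hρ : ∀ a, ρ (D a) = 0)

include hρ

theorem gelfandFuchsForm_skew (x y : WittCurrentAlgebra D L) :
    gelfandFuchsForm D L ρ x y + gelfandFuchsForm D L ρ y x = 0 := by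
  rw [gelfandFuchsForm_apply, gelfandFuchsForm_apply, ← map_add]
  set f := vectorField D x
  set g := vectorField D y
  convert hρ (D (D f) * g - D f * D g + f * D (D g) - f * g) using 2
  simp only [map_add, map_sub, Derivation.leibniz, smul_eq_mul]
  ring

theorem gelfandFuchsForm_jacobi (x y z : WittCurrentAlgebra D L) :
    gelfandFuchsForm D L ρ ⁅x, y⁆ z + gelfandFuchsForm D L ρ ⁅y, z⁆ x
      + gelfandFuchsForm D L ρ ⁅z, x⁆ y = 0 := by
  set f := vectorField D x with hf
  set g := vectorField D y with hg
  set h := vectorField D z with hh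
  let W (u v : A) := D u * v - u * D v
  simp only [gelfandFuchsForm_apply, ← map_add, vectorField_lie, ← hf, ← hg, ← hh]
  convert hρ (D (D (W f g)) * h - D (W f g) * D h + (D (D (W g h)) * f - D (W g h) * D f)
    + (D (D (W h f)) * g - D (W h f) * D g)) using 2
  simp only [W, map_add, map_sub, Derivation.leibniz, smul_eq_mul]
  ring

theorem twistForm_jacobi {τ : Dual R L} (hτ : ∀ X Y : L, τ ⁅X, Y⁆ = 0)
    (x y z : WittCurrentAlgebra D L) :
    twistForm D ρ τ ⁅x, y⁆ z + twistForm D ρ τ ⁅y, z⁆ x + twistForm D ρ τ ⁅z, x⁆ y = 0 := by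
  set f := vectorField D x with hf
  set g := vectorField D y with hg
  set h := vectorField D z with hh
  set p := τ.baseChange A (current D x) with hp
  set q := τ.baseChange A (current D y) with hq
  set r := τ.baseChange A (current D z) with hr
  let W (u v : A) := D u * v - u * D v
  have trace_lie (u v : WittCurrentAlgebra D L) : τ.baseChange A (current D ⁅u, v⁆) =
      vectorField D v * D (τ.baseChange A (current D u))
        - vectorField D u * D (τ.baseChange A (current D v)) := by
    simp only [current_lie, map_add, map_sub, map_smul, dualBaseChange_ofDerivation,
      dualBaseChange_lie hτ, smul_eq_mul]
    ring
  simp only [twistForm_apply, ← map_sub, ← map_add, vectorField_lie, trace_lie, ← hf, ← hg, ← hh,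
    ← hp, ← hq, ← hr]
  convert hρ (D (W f g) * r + D (W g h) * p + D (W h f) * q) using 2
  simp only [W, map_add, map_sub, Derivation.leibniz, smul_eq_mul]
  ring

theorem affineForm_skew {κ : LinearMap.BilinForm R L} (symm : κ.IsSymm)
    (x y : WittCurrentAlgebra D L) : affineForm D ρ κ x y + affineForm D ρ κ y x = 0 := by
  rw [affineForm_apply, affineForm_apply, bilinFormBaseChange_comm symm _ (current D x),
    ← map_add, ← derivation_bilinFormBaseChange, hρ]

theorem affineForm_jacobi {κ : LinearMap.BilinForm R L} (symm : κ.IsSymm)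
    (inv : κ.lieInvariant L) (x y z : WittCurrentAlgebra D L) :
    affineForm D ρ κ ⁅x, y⁆ z + affineForm D ρ κ ⁅y, z⁆ x + affineForm D ρ κ ⁅z, x⁆ y = 0 := by
  have by_parts (u v : WittCurrentAlgebra D L) : affineForm D ρ κ u v =
      ρ (-κ.baseChange A (current D u) (ofDerivation L D (current D v))) := by
    rw [affineForm_apply, ← sub_eq_zero, ← map_sub, sub_neg_eq_add,
      ← derivation_bilinFormBaseChange, hρ]
  simp only [by_parts, current_lie, ← map_add]
  set X := current D x
  set Y := current D y
  set Z := current D z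
  convert hρ (-κ.baseChange A ⁅X, Y⁆ Z) using 2
  have comm (U V : A ⊗[R] L) :=
    bilinFormBaseChange_comm symm (ofDerivation L D U) (ofDerivation L D V)
  rw [map_neg, derivation_bilinFormBaseChange_lie D symm inv]
  simp only [map_add, map_sub, map_smul, LinearMap.add_apply, LinearMap.sub_apply,
    LinearMap.smul_apply, smul_eq_mul, comm Y X, comm Z X, comm Z Y]
  ring

variable [IsAddTorsionFree R]

variable (L) in
/-- The 2-cocycle of `gelfandFuchsForm`. -/
def gelfandFuchsCocycle :
    twoCocycle R (WittCurrentAlgebra D L) (TrivialLieModule R (WittCurrentAlgebra D L) R) :=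
  scalarTwoCocycle (gelfandFuchsForm D L ρ) (gelfandFuchsForm_skew hρ)
    (gelfandFuchsForm_jacobi hρ)

/-- The 2-cocycle of `twistForm`. -/
def twistCocycle {τ : Dual R L} (hτ : ∀ X Y : L, τ ⁅X, Y⁆ = 0) :
    twoCocycle R (WittCurrentAlgebra D L) (TrivialLieModule R (WittCurrentAlgebra D L) R) :=
  scalarTwoCocycle (twistForm D ρ τ) (twistForm_skew D ρ τ) (twistForm_jacobi hρ hτ)

/-- The 2-cocycle of `affineForm`. -/
def affineCocycle {κ : LinearMap.BilinForm R L} (symm : κ.IsSymm) (inv : κ.lieInvariant L) :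
    twoCocycle R (WittCurrentAlgebra D L) (TrivialLieModule R (WittCurrentAlgebra D L) R) :=
  scalarTwoCocycle (affineForm D ρ κ) (affineForm_skew hρ symm) (affineForm_jacobi hρ symm inv)

end Cocycles

end WittCurrentAlgebra

/-! ### Fourier modes -/

section GroupAlgebra

variable {R M : Type*} [CommRing R]

section EulerDerivation

variable [AddCommMonoid M]

/-- The derivation `tᵐ ↦ φ(m) tᵐ` of a monoid algebra; for `R[t, t⁻¹]` and the inclusion `φ` of
`ℤ` it is `t d/dt`. -/
def eulerDerivation (φ : M →+ R) :
    Derivation R (AddMonoidAlgebra R M) (AddMonoidAlgebra R M) :=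
  let E := Finsupp.lsum R (fun m ↦ φ m • AddMonoidAlgebra.lsingle m) ∘ₗ
    (AddMonoidAlgebra.coeffLinearEquiv R).toLinearMap
  Derivation.mk' E fun p q ↦ by
    induction p using AddMonoidAlgebra.induction_linear with
    | zero => simp
    | add p p' hp hp' => simp only [add_mul, map_add, hp, hp', smul_add, add_smul]; abel
    | single m a =>
      induction q using AddMonoidAlgebra.induction_linear with
      | zero => simp
      | add q q' hq hq' => simp only [mul_add, map_add, hq, hq', smul_add, add_smul]; abel
      | single n b =>
        have E_single (m : M) (a : R) : E (.single m a) = .single m (φ m * a) := by simp [E]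
        simp only [AddMonoidAlgebra.single_mul_single, E_single, smul_eq_mul]
        rw [add_comm n m, ← AddMonoidAlgebra.single_add, map_add]
        congr 1
        ring

@[simp]
theorem eulerDerivation_single (φ : M →+ R) (m : M) (a : R) :
    eulerDerivation φ (.single m a) = .single m (φ m * a) := by
  simp [eulerDerivation]

end EulerDerivation

section Residue

variable [AddCommGroup M]

variable (R M) in
/-- The coefficient of `t⁰`. On `R[t, t⁻¹]` this is the residue at `0` of `p dt/t`. -/
def residue : AddMonoidAlgebra R M →ₗ[R] R :=
  Finsupp.lapply 0 ∘ₗ (AddMonoidAlgebra.coeffLinearEquiv R).toLinearMap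

theorem residue_apply (p : AddMonoidAlgebra R M) : residue R M p = p.coeff 0 :=
  rfl

theorem residue_single_mul (m : M) (a : R) (p : AddMonoidAlgebra R M) :
    residue R M (.single m a * p) = a * p.coeff (-m) := by
  rw [residue_apply, AddMonoidAlgebra.coeff_single_mul_apply, add_zero]

theorem residue_eulerDerivation (φ : M →+ R) (p : AddMonoidAlgebra R M) :
    residue R M (eulerDerivation φ p) = 0 := by
  induction p using AddMonoidAlgebra.induction_linear with
  | zero => simp
  | add p q hp hq => rw [map_add, map_add, hp, hq, add_zero]
  | single m a => rcases eq_or_ne m 0 with rfl | hm <;> simp [residue_apply, *]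

end Residue

end GroupAlgebra

section Finsupp

variable {R M L V V' : Type*} [CommRing R] [LieRing L] [LieAlgebra R L]
  [AddCommGroup V] [Module R V] [AddCommGroup V'] [Module R V']

theorem lie_map_map_eq_sum (e : (M →₀ V) →ₗ[R] L) (e' : (M →₀ V') →ₗ[R] L) (f : M →₀ V)
    (g : M →₀ V') :
    ⁅e f, e' g⁆ = f.sum fun m v ↦ g.sum fun n w ↦ ⁅e (.single m v), e' (.single n w)⁆ := by
  conv_lhs => rw [← f.sum_single, ← g.sum_single, map_finsuppSum, map_finsuppSum]
  simp only [Finsupp.sum, sum_lie]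
  simp only [lie_sum]

theorem ofCoeff_eq_sum (f : M →₀ R) :
    AddMonoidAlgebra.ofCoeff f = f.sum AddMonoidAlgebra.single := by
  conv_lhs => rw [← f.sum_single, AddMonoidAlgebra.ofCoeff_finsuppSum]
  rfl

end Finsupp

namespace WittCurrentAlgebra

open AddMonoidAlgebra LieAlgebra

variable {R M : Type*} [CommRing R] [AddCommGroup M] (L : Type*) [LieRing L] [LieAlgebra R L]
  (φ : M →+ R)

/-- The vector field `∑ f(m) L_m` with `L_m = -tᵐ D`. -/
def wittModes : (M →₀ R) →ₗ[R] WittCurrentAlgebra (eulerDerivation φ) L :=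
  (SemiDirectSum.inr (WittAlgebra.action (eulerDerivation φ) L)).toLinearMap ∘ₗ
    ((coeffLinearEquiv R).symm.trans (WittAlgebra.equiv (eulerDerivation φ)).symm).toLinearMap

theorem wittModes_single (m : M) (a : R) : wittModes L φ (.single m a) =
    SemiDirectSum.inr (WittAlgebra.action (eulerDerivation φ) L)
      ((WittAlgebra.equiv (eulerDerivation φ)).symm (single m a)) :=
  rfl

variable {L}

/-- The current `∑ tᵐ ⊗ F(m)`. -/
def currentModes : (M →₀ L) →ₗ[R] WittCurrentAlgebra (eulerDerivation φ) L :=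
  (SemiDirectSum.inl (WittAlgebra.action (eulerDerivation φ) L)).toLinearMap ∘ₗ
    (LoopAlgebra.toFinsupp R M L).symm.toLinearMap

theorem wittModes_lie_wittModes (f g : M →₀ R) :
    ⁅wittModes L φ f, wittModes L φ g⁆ = wittModes L φ
      (f.sum fun m a ↦ g.sum fun n b ↦ .single (m + n) (a * b * (φ m - φ n))) := by
  rw [lie_map_map_eq_sum]
  simp_rw [map_finsuppSum]
  refine Finsupp.sum_congr fun m _ ↦ Finsupp.sum_congr fun n _ ↦ ?_
  simp_rw [wittModes_single, ← LieHom.map_lie]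
  congr 1
  apply (WittAlgebra.equiv _).injective
  simp_rw [WittAlgebra.equiv_lie, LinearEquiv.apply_symm_apply, eulerDerivation_single,
    single_mul_single, ← single_sub]
  congr 1
  ring

theorem wittModes_lie_currentModes (f : M →₀ R) (F : M →₀ L) :
    ⁅wittModes L φ f, currentModes φ F⁆ = currentModes φ
      (f.sum fun m a ↦ F.sum fun n X ↦ .single (m + n) ((a * -φ n) • X)) := by
  rw [lie_map_map_eq_sum]
  simp_rw [map_finsuppSum]
  refine Finsupp.sum_congr fun m _ ↦ Finsupp.sum_congr fun n _ ↦ ?_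
  simp [wittModes, currentModes, TensorProduct.smul_tmul', single_mul_single]

theorem currentModes_lie_wittModes (F : M →₀ L) (f : M →₀ R) :
    ⁅currentModes φ F, wittModes L φ f⁆ = currentModes φ
      (F.sum fun m X ↦ f.sum fun n a ↦ .single (m + n) ((a * φ m) • X)) := by
  rw [lie_map_map_eq_sum]
  simp_rw [map_finsuppSum]
  refine Finsupp.sum_congr fun m _ ↦ Finsupp.sum_congr fun n _ ↦ ?_
  simp [wittModes, currentModes, TensorProduct.smul_tmul', single_mul_single, add_comm]

theorem currentModes_lie_currentModes (F G : M →₀ L) :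
    ⁅currentModes φ F, currentModes φ G⁆ = currentModes φ
      (F.sum fun m X ↦ G.sum fun n Y ↦ .single (m + n) ⁅X, Y⁆) := by
  rw [lie_map_map_eq_sum]
  simp_rw [map_finsuppSum]
  refine Finsupp.sum_congr fun m _ ↦ Finsupp.sum_congr fun n _ ↦ ?_
  simp [currentModes]

/-- The element `∑ f(m) L_m + ∑ tᵐ ⊗ F(m)` with Fourier coefficients `(f, F)`. -/
def modes : (M →₀ R) × (M →₀ L) →ₗ[R] WittCurrentAlgebra (eulerDerivation φ) L :=
  (wittModes L φ).coprod (currentModes φ)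

@[simp]
theorem vectorField_modes (f : M →₀ R) (F : M →₀ L) :
    vectorField _ (modes φ (f, F)) = ofCoeff f := by
  simp [modes, vectorField, wittModes, currentModes]

@[simp]
theorem current_modes (f : M →₀ R) (F : M →₀ L) :
    current _ (modes φ (f, F)) = (LoopAlgebra.toFinsupp R M L).symm F := by
  simp [modes, current, wittModes, currentModes]

theorem modes_injective : Function.Injective (modes (L := L) φ) := by
  rintro ⟨f, F⟩ ⟨g, G⟩ h
  have hf := congrArg (vectorField _) h
  have hF := congrArg (current _) h
  rw [vectorField_modes, vectorField_modes, ofCoeff_inj] at hf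
  rw [current_modes, current_modes, EquivLike.apply_eq_iff_eq] at hF
  rw [hf, hF]

theorem modes_lie (f g : M →₀ R) (F G : M →₀ L) :
    ⁅modes φ (f, F), modes φ (g, G)⁆ = modes φ
      (f.sum fun m a ↦ g.sum fun n b ↦ .single (m + n) (a * b * (φ m - φ n)),
        (f.sum fun m a ↦ G.sum fun n Y ↦ .single (m + n) ((a * -φ n) • Y))
          + (F.sum fun m X ↦ g.sum fun n b ↦ .single (m + n) ((b * φ m) • X))
          + (F.sum fun m X ↦ G.sum fun n Y ↦ .single (m + n) ⁅X, Y⁆)) := by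
  simp only [modes, LinearMap.coprod_apply, lie_add, add_lie, wittModes_lie_wittModes,
    wittModes_lie_currentModes, currentModes_lie_wittModes, currentModes_lie_currentModes, map_add]
  abel

theorem coeff_dualBaseChange_toFinsupp_symm (τ : Dual R L) (G : M →₀ L) (n : M) :
    (τ.baseChange (AddMonoidAlgebra R M) ((LoopAlgebra.toFinsupp R M L).symm G)).coeff n =
      τ (G n) := by
  induction G using Finsupp.induction_linear with
  | zero => simp
  | add G G' h h' => simp_rw [map_add, coeff_add, Finsupp.add_apply, h, h', map_add]
  | single m X =>
    classical
    simp [Finsupp.single_apply, apply_ite τ]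

theorem gelfandFuchsForm_modes (f g : M →₀ R) (F G : M →₀ L) :
    gelfandFuchsForm _ L (residue R M) (modes φ (f, F)) (modes φ (g, G)) =
      f.sum fun m a ↦ a * g (-m) * (φ m ^ 3 - φ m) := by
  rw [gelfandFuchsForm_apply, vectorField_modes, vectorField_modes, ofCoeff_eq_sum f]
  simp only [map_finsuppSum, eulerDerivation_single, ← Finsupp.sum_sub, Finsupp.sum_mul,
    ← single_sub, residue_single_mul]
  exact Finsupp.sum_congr fun m _ ↦ by ring

theorem residue_eulerDerivation_eulerDerivation_mul (f : M →₀ R) (p : AddMonoidAlgebra R M) :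
    residue R M (eulerDerivation φ (eulerDerivation φ (ofCoeff f)) * p) =
      f.sum fun m a ↦ a * φ m ^ 2 * p.coeff (-m) := by
  rw [ofCoeff_eq_sum f]
  simp only [map_finsuppSum, eulerDerivation_single, Finsupp.sum_mul, residue_single_mul]
  exact Finsupp.sum_congr fun m _ ↦ by ring

theorem twistForm_modes (τ : Dual R L) (f g : M →₀ R) (F G : M →₀ L) :
    twistForm _ (residue R M) τ (modes φ (f, F)) (modes φ (g, G)) =
      (f.sum fun m a ↦ a * φ m ^ 2 * τ (G (-m))) - g.sum fun n b ↦ b * φ n ^ 2 * τ (F (-n)) := by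
  simp only [twistForm_apply, vectorField_modes, current_modes,
    residue_eulerDerivation_eulerDerivation_mul, coeff_dualBaseChange_toFinsupp_symm]

theorem affineForm_modes (κ : LinearMap.BilinForm R L) (f g : M →₀ R) (F G : M →₀ L) :
    affineForm _ (residue R M) κ (modes φ (f, F)) (modes φ (g, G)) =
      F.sum fun m X ↦ φ m * κ X (G (-m)) := by
  rw [affineForm_apply, current_modes, current_modes]
  conv_lhs => rw [← F.sum_single]
  simp only [map_finsuppSum, LoopAlgebra.toFinsupp_symm_single, LinearMap.finsupp_sum_apply,
    Lie.Derivation.ofDerivation_apply, LinearMap.rTensor_tmul,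
    Derivation.coeFn_coe, eulerDerivation_single, mul_one, bilinFormBaseChange_tmul_left,
    residue_single_mul, coeff_dualBaseChange_toFinsupp_symm]

end WittCurrentAlgebra

/-! ### The central extension for `gl(N)` -/

theorem lie_lie_cyclic {S : Type*} [LieRing S] (x y z : S) :
    ⁅⁅x, y⁆, z⁆ + ⁅⁅y, z⁆, x⁆ + ⁅⁅z, x⁆, y⁆ = 0 := by
  rw [← neg_eq_zero, neg_add, neg_add, lie_skew, lie_skew, lie_skew, lie_jacobi]

section InvariantForms

attribute [local instance] LieRing.ofAssociativeRing

theorem linMulLin_self_isSymm {R L : Type*} [CommRing R] [AddCommGroup L] [Module R L]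
    (τ : Dual R L) : (LinearMap.BilinForm.linMulLin τ τ).IsSymm :=
  ⟨fun X Y ↦ mul_comm (τ X) (τ Y)⟩

theorem linMulLin_self_lieInvariant {R L : Type*} [CommRing R] [LieRing L] [LieAlgebra R L]
    {τ : Dual R L} (hτ : ∀ X Y : L, τ ⁅X, Y⁆ = 0) :
    (LinearMap.BilinForm.linMulLin τ τ).lieInvariant L := fun X Y Z ↦ by
  simp [hτ]

variable {n R : Type*} [Fintype n] [CommRing R]

theorem traceLinearMap_lie [DecidableEq n] (X Y : Matrix n n R) :
    Matrix.traceLinearMap n R R ⁅X, Y⁆ = 0 := by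
  rw [Ring.lie_def, Matrix.traceLinearMap_apply, Matrix.trace_sub, Matrix.trace_mul_comm, sub_self]

variable (n R) in
/-- The trace form `(X, Y) ↦ tr (X Y)` of `gl(n)`. -/
def traceMulForm : LinearMap.BilinForm R (Matrix n n R) :=
  (LinearMap.mul R (Matrix n n R)).compr₂ (Matrix.traceLinearMap n R R)

theorem traceMulForm_apply (X Y : Matrix n n R) : traceMulForm n R X Y = (X * Y).trace :=
  rfl

theorem traceMulForm_isSymm : (traceMulForm n R).IsSymm :=
  ⟨Matrix.trace_mul_comm⟩

theorem traceMulForm_lieInvariant [DecidableEq n] :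
    (traceMulForm n R).lieInvariant (Matrix n n R) := by
  intro X Y Z
  simp only [traceMulForm_apply, Ring.lie_def, sub_mul, mul_sub, Matrix.trace_sub, ← mul_assoc]
  rw [Matrix.trace_mul_cycle Y Z X]
  ring

end InvariantForms

namespace VirGl

open LieAlgebra WittCurrentAlgebra

attribute [local instance] LieRing.ofAssociativeRing

variable (N : ℕ) (c k0 k1 k2 : ℝ)

/-- The semidirect sum `W ⋉ L gl(N)` of the Witt algebra and the loop algebra of `gl(N)`. -/
abbrev Base : Type :=
  WittCurrentAlgebra (eulerDerivation (Int.castAddHom ℝ)) (Matrix (Fin N) (Fin N) ℝ)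

/-- The 2-cocycle of `W ⋉ L gl(N)` with central charges `c, k₀, k₁, k₂`. -/
def cocycle : twoCocycle ℝ (Base N) (TrivialLieModule ℝ (Base N) ℝ) :=
  have hρ := residue_eulerDerivation (R := ℝ) (Int.castAddHom ℝ)
  have hτ := traceLinearMap_lie (n := Fin N) (R := ℝ)
  have symm := traceMulForm_isSymm (n := Fin N) (R := ℝ)
  (c / 12) • gelfandFuchsCocycle _ hρ + (k0 / 2) • twistCocycle hρ hτ
    + k1 • affineCocycle hρ symm traceMulForm_lieInvariant
    + k2 • affineCocycle hρ (linMulLin_self_isSymm _) (linMulLin_self_lieInvariant hτ)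

theorem cocycle_modes (f g : ℤ →₀ ℝ) (F G : ℤ →₀ Matrix (Fin N) (Fin N) ℝ) :
    (cocycle N c k0 k1 k2 : Base N →ₗ[ℝ] Base N →ₗ[ℝ] TrivialLieModule ℝ (Base N) ℝ)
      (modes _ (f, F)) (modes _ (g, G)) = (TrivialLieModule.equiv ℝ (Base N) ℝ).symm
        ((f.sum fun m a ↦ a * g (-m) * (c / 12) * ((m : ℝ) ^ 3 - m))
          + ((f.sum fun m a ↦ a * (k0 / 2) * (m : ℝ) ^ 2 * (G (-m)).trace)
            - g.sum fun n b ↦ b * (k0 / 2) * (n : ℝ) ^ 2 * (F (-n)).trace)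
          + F.sum fun m X ↦
            (m : ℝ) * (k1 * (X * G (-m)).trace + k2 * X.trace * (G (-m)).trace)) := by
  change (TrivialLieModule.equiv ℝ (Base N) ℝ).symm
    (c / 12 * gelfandFuchsForm _ _ (residue ℝ ℤ) (modes _ (f, F)) (modes _ (g, G))
      + k0 / 2 * twistForm _ (residue ℝ ℤ) (Matrix.traceLinearMap _ ℝ ℝ) (modes _ (f, F))
          (modes _ (g, G))
      + k1 * affineForm _ (residue ℝ ℤ) (traceMulForm _ ℝ) (modes _ (f, F)) (modes _ (g, G))
      + k2 * affineForm _ (residue ℝ ℤ) (LinearMap.BilinForm.linMulLin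
          (Matrix.traceLinearMap _ ℝ ℝ) (Matrix.traceLinearMap _ ℝ ℝ)) (modes _ (f, F))
          (modes _ (g, G))) = _
  rw [gelfandFuchsForm_modes, twistForm_modes, affineForm_modes, affineForm_modes, mul_sub,
    add_assoc (_ + _)]
  simp only [Finsupp.mul_sum, ← Finsupp.sum_add, traceMulForm_apply,
    LinearMap.BilinForm.linMulLin_apply, Matrix.traceLinearMap_apply, Int.coe_castAddHom]
  refine congrArg _ (congrArg₂ (· + ·) (congrArg₂ (· + ·) ?_ (congrArg₂ (· - ·) ?_ ?_)) ?_) <;>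
    exact Finsupp.sum_congr fun _ _ ↦ by ring

/-- The identification of `W ⊕ L gl(N) ⊕ ℝC` with the central extension of `W ⋉ L gl(N)` by the
cocycle with central charges `c, k₀, k₁, k₂`. -/
def toExtension : VirGl N →ₗ[ℝ] ofTwoCocycle (cocycle N c k0 k1 k2) where
  toFun x := ofProd _ (modes _ (x.1, x.2.1), (TrivialLieModule.equiv ℝ (Base N) ℝ).symm x.2.2)
  map_add' x y := by
    refine congrArg (ofProd _) (Prod.ext ?_ ?_)
    · exact map_add (modes _) (x.1, x.2.1) (y.1, y.2.1)
    · exact map_add (TrivialLieModule.equiv ℝ (Base N) ℝ).symm x.2.2 y.2.2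
  map_smul' r x := by
    refine congrArg (ofProd _) (Prod.ext ?_ ?_)
    · exact map_smul (modes _) r (x.1, x.2.1)
    · exact map_smul (TrivialLieModule.equiv ℝ (Base N) ℝ).symm r x.2.2

theorem toExtension_injective : Function.Injective (toExtension N c k0 k1 k2) := by
  rintro ⟨f, F, r⟩ ⟨g, G, s⟩ h
  obtain ⟨h_modes, h_central⟩ := Prod.ext_iff.mp ((ofProd _).injective h)
  obtain ⟨rfl, rfl⟩ := Prod.ext_iff.mp (modes_injective _ h_modes)
  obtain rfl := (TrivialLieModule.equiv ℝ (Base N) ℝ).symm.injective h_central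
  rfl

theorem toExtension_virGlBracket (x y : VirGl N) :
    toExtension N c k0 k1 k2 (virGlBracket N c k0 k1 k2 x y) =
      ⁅toExtension N c k0 k1 k2 x, toExtension N c k0 k1 k2 y⁆ := by
  obtain ⟨f, F, r⟩ := x
  obtain ⟨g, G, s⟩ := y
  rw [bracket_ofTwoCocycle]
  refine congrArg (ofProd _) (Prod.ext (modes_lie _ f g F G).symm ?_)
  simp only [toExtension, LinearMap.coe_mk, AddHom.coe_mk, Equiv.symm_apply_apply, cocycle_modes,
    trivial_lie_zero, add_zero, sub_zero]
  rfl

end VirGl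

end

/-- The bracket of eq. (3.7) on `W ⊕ L gl(N) ⊕ ℝC` is antisymmetric and satisfies the
Jacobi identity, i.e. `Vir ⋉̃_{k₀} ĝl(N)_{k₁,k₂}` is a Lie algebra over `ℝ`. -/
theorem virGl_isLieAlgebra (N : ℕ) (hN : 1 ≤ N) (c k0 k1 k2 : ℝ) :
    (∀ x y : VirGl N, virGlBracket N c k0 k1 k2 x y = - virGlBracket N c k0 k1 k2 y x) ∧
    (∀ x y z : VirGl N,
      virGlBracket N c k0 k1 k2 (virGlBracket N c k0 k1 k2 x y) z
        + virGlBracket N c k0 k1 k2 (virGlBracket N c k0 k1 k2 y z) x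
        + virGlBracket N c k0 k1 k2 (virGlBracket N c k0 k1 k2 z x) y = 0) := by
  have inj := VirGl.toExtension_injective N c k0 k1 k2
  have map_bracket := VirGl.toExtension_virGlBracket N c k0 k1 k2
  refine ⟨fun x y ↦ inj ?_, fun x y z ↦ inj ?_⟩
  · rw [map_neg, map_bracket, map_bracket, lie_skew]
  · simp only [map_add, map_zero, map_bracket, lie_lie_cyclic]
end

section
/- (Cocycle underlying the g'^a-term of eq. (4.3).) Let 𝔤 be a finite-dimensional real Lie algebra and φ : 𝔤 → ℝ a linear functional vanishing on [𝔤,𝔤]. Let V = W ⊕ L gl(N) ⊕ L𝔤 with brackets [L_m, L_n] = (m−n) L_{m+n}, [L_m, X(n)] = −n X(m+n) for X in gl(N) or in 𝔤, [X(m), X'(n)] = [X,X'](m+n) within L gl(N) and within L𝔤, and [X(m), Y(n)] = 0 for X ∈ gl(N), Y ∈ 𝔤. Define the antisymmetric bilinear form ω on V by ω(X(m), Y(n)) = −ω(Y(n), X(m)) = m δ_{m+n,0} tr(X) φ(Y) for X ∈ gl(N), Y ∈ 𝔤, and ω = 0 on all other pairs of summands. Then ω is a 2-cocycle on V: for all x,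 y, z ∈ V, ω([x,y], z) + ω([y,z], x) + ω([z,x], y) = 0. -/
/-- The bracket on `W ⊕ L gl(N) ⊕ L𝔤`:
`[L_m, L_n] = (m−n) L_{m+n}`, `[L_m, X(n)] = −n X(m+n)` for `X` in `gl(N)` or `𝔤`,
loop brackets within `L gl(N)` and within `L𝔤`, and `[X(m), Y(n)] = 0` for
`X ∈ gl(N)`, `Y ∈ 𝔤`. -/
noncomputable def wGlLoopBracket (N : ℕ) (𝔤 : Type*) [LieRing 𝔤] [LieAlgebra ℝ 𝔤]
    (x y : (ℤ →₀ ℝ) × (ℤ →₀ Matrix (Fin N) (Fin N) ℝ) × (ℤ →₀ 𝔤)) :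
    (ℤ →₀ ℝ) × (ℤ →₀ Matrix (Fin N) (Fin N) ℝ) × (ℤ →₀ 𝔤) :=
  ⟨x.1.sum fun m a => y.1.sum fun n b =>
      Finsupp.single (m + n) (a * b * ((m : ℝ) - (n : ℝ))),
   (x.1.sum fun m a => y.2.1.sum fun n X =>
        Finsupp.single (m + n) ((a * (-(n : ℝ))) • X))
    + (x.2.1.sum fun m X => y.1.sum fun n b =>
        Finsupp.single (m + n) ((b * (m : ℝ)) • X))
    + (x.2.1.sum fun m X => y.2.1.sum fun n Y =>
        Finsupp.single (m + n) (X * Y - Y * X)),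
   (x.1.sum fun m a => y.2.2.sum fun n Y =>
        Finsupp.single (m + n) ((a * (-(n : ℝ))) • Y))
    + (x.2.2.sum fun m Y => y.1.sum fun n b =>
        Finsupp.single (m + n) ((b * (m : ℝ)) • Y))
    + (x.2.2.sum fun m Y => y.2.2.sum fun n Y' => Finsupp.single (m + n) ⁅Y, Y'⁆)⟩

/-- The antisymmetric bilinear form `ω` on `W ⊕ L gl(N) ⊕ L𝔤` with
`ω(X(m), Y(n)) = −ω(Y(n), X(m)) = m δ_{m+n,0} tr(X) φ(Y)` for `X ∈ gl(N)`, `Y ∈ 𝔤`,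
and `ω = 0` on all other pairs of summands. -/
noncomputable def wGlLoopOmega (N : ℕ) (𝔤 : Type*) [LieRing 𝔤] [LieAlgebra ℝ 𝔤]
    (φ : 𝔤 →ₗ[ℝ] ℝ)
    (x y : (ℤ →₀ ℝ) × (ℤ →₀ Matrix (Fin N) (Fin N) ℝ) × (ℤ →₀ 𝔤)) : ℝ :=
  (x.2.1.sum fun m X => (m : ℝ) * X.trace * φ (y.2.2 (-m)))
    - (y.2.1.sum fun n X => (n : ℝ) * X.trace * φ (x.2.2 (-n)))

/-!
Identify `L_m` with the vector field `-t^m · t d/dt`, so that the Witt algebra acts on the loops in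
any module. For a bilinear map `B`, the pairing `⟨f, g⟩ = Res B(df, g)` of loops is invariant under
this action, since the Lie derivative of a 1-form on the circle is exact and has residue zero. If
`B` vanishes on brackets in either argument, then `⟨·, ·⟩` sees the bracket of `x = (a, f, g)` and
`y = (b, f', g')` in `W ⊕ L𝔞 ⊕ L𝔤` only through `a · f' - b · f` and `a · g' - b · g`: the two
projections behave as 1-cocycles, and the form `ω(x, y) = ⟨f, g'⟩ - ⟨f', g⟩` is their cup product
along an invariant pairing.
The theorem is the case `𝔞 = gl(N)`, `B(X, Y) = tr(X) φ(Y)`.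
-/

section Loops

variable {R M P A : Type*} [CommRing R] [AddCommGroup M] [Module R M]
  [AddCommGroup P] [Module R P] [AddCommGroup A] [Module R A]

/-- The action `L_m · X(n) = -n X(m+n)` of the Witt algebra on the loops in a module `M`. -/
noncomputable def wittAction : (ℤ →₀ R) →ₗ[R] (ℤ →₀ M) →ₗ[R] (ℤ →₀ M) :=
  Finsupp.linearCombination R fun m ↦
    Finsupp.lsum R fun n ↦ (-(n : R)) • Finsupp.lsingle (m + n)

/-- The pairing `⟨X(m), Y(n)⟩ = m δ_{m+n,0} B(X, Y)` of loops induced by a bilinear map `B`. -/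
noncomputable def loopPairing (B : M →ₗ[R] P →ₗ[R] A) : (ℤ →₀ M) →ₗ[R] (ℤ →₀ P) →ₗ[R] A :=
  Finsupp.lsum R fun m ↦ (m : R) • B.compl₂ (Finsupp.lapply (-m))

theorem wittAction_apply (a : ℤ →₀ R) (f : ℤ →₀ M) :
    wittAction a f =
      a.sum fun m r ↦ f.sum fun n X ↦ Finsupp.single (m + n) ((r * (-(n : R))) • X) := by
  simp [wittAction, Finsupp.linearCombination_apply, LinearMap.finsupp_sum_apply,
    Finsupp.smul_sum, mul_smul]

theorem neg_wittAction_apply (a : ℤ →₀ R) (f : ℤ →₀ M) :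
    -wittAction a f =
      f.sum fun m X ↦ a.sum fun n r ↦ Finsupp.single (m + n) ((r * (m : R)) • X) := by
  rw [wittAction_apply, Finsupp.sum_comm]
  simp [Finsupp.sum, add_comm]

theorem wittAction_single_single (m n : ℤ) (r : R) (X : M) :
    wittAction (Finsupp.single m r) (Finsupp.single n X) =
      Finsupp.single (m + n) ((r * (-(n : R))) • X) := by
  simp [wittAction, mul_smul]

theorem wittAction_sub_wittAction (a b : ℤ →₀ R) (f g : ℤ →₀ M) :
    wittAction a g - wittAction b f =
      (a.sum fun m r ↦ g.sum fun n X ↦ Finsupp.single (m + n) ((r * (-(n : R))) • X)) +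
        f.sum fun m X ↦ b.sum fun n r ↦ Finsupp.single (m + n) ((r * (m : R)) • X) := by
  rw [sub_eq_add_neg, wittAction_apply, neg_wittAction_apply]

theorem wittAction_commutator (a b : ℤ →₀ R) :
    wittAction a b - wittAction b a =
      a.sum fun m r ↦ b.sum fun n s ↦ Finsupp.single (m + n) (r * s * ((m : R) - (n : R))) := by
  rw [wittAction_sub_wittAction, ← Finsupp.sum_add]
  refine Finsupp.sum_congr fun m _ ↦ ?_
  rw [← Finsupp.sum_add]
  refine Finsupp.sum_congr fun n _ ↦ ?_
  rw [← Finsupp.single_add, smul_eq_mul, smul_eq_mul]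
  congr 1
  ring

variable (B : M →ₗ[R] P →ₗ[R] A)

/-- The antisymmetric form on `W ⊕ LM ⊕ LP` that is `loopPairing B` on `LM × LP` and vanishes on
the pairs of summands other than `LM × LP` and `LP × LM`. -/
noncomputable def wittLoopForm (x y : (ℤ →₀ R) × (ℤ →₀ M) × (ℤ →₀ P)) : A :=
  loopPairing B x.2.1 y.2.2 - loopPairing B y.2.1 x.2.2

theorem loopPairing_apply (f : ℤ →₀ M) (g : ℤ →₀ P) :
    loopPairing B f g = f.sum fun m X ↦ (m : R) • B X (g (-m)) := by
  simp [loopPairing, LinearMap.finsupp_sum_apply]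

theorem loopPairing_single_single (m n : ℤ) (X : M) (Y : P) :
    loopPairing B (Finsupp.single m X) (Finsupp.single n Y) =
      if m + n = 0 then (m : R) • B X Y else 0 := by
  have hmn : n = -m ↔ m + n = 0 := by omega
  simp [loopPairing_apply, Finsupp.single_apply, hmn, apply_ite (B X)]

theorem loopPairing_wittAction_left (a : ℤ →₀ R) (f : ℤ →₀ M) (g : ℤ →₀ P) :
    loopPairing B (wittAction a f) g = -loopPairing B f (wittAction a g) := by
  induction a using Finsupp.induction_linear with
  | zero => simp
  | add a a' ha ha' => simp [ha, ha', add_comm]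
  | single m r =>
    induction f using Finsupp.induction_linear with
    | zero => simp
    | add f f' hf hf' => simp [hf, hf', add_comm]
    | single n X =>
      induction g using Finsupp.induction_linear with
      | zero => simp
      | add g g' hg hg' => simp [hg, hg', add_comm]
      | single k Y =>
        simp only [wittAction_single_single, loopPairing_single_single, map_smul,
          LinearMap.smul_apply, show n + (m + k) = m + n + k by ring]
        split_ifs with h
        · obtain rfl : k = -(m + n) := by omega
          push_cast
          module
        · simp

end Loops

section Brackets

variable {𝔞 𝔤 : Type*} [LieRing 𝔞] [LieRing 𝔤]

/-- The bracket `[X(m), Y(n)] = [X, Y](m+n)` of the loop algebra `L𝔞`. -/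
noncomputable def loopBracket (f g : ℤ →₀ 𝔞) : ℤ →₀ 𝔞 :=
  f.sum fun m X ↦ g.sum fun n Y ↦ Finsupp.single (m + n) ⁅X, Y⁆

variable {R A : Type*} [CommRing R] [LieAlgebra R 𝔞] [LieAlgebra R 𝔤]
  [AddCommGroup A] [Module R A]

theorem loopPairing_loopBracket_left {P : Type*} [AddCommGroup P] [Module R P]
    (B : 𝔞 →ₗ[R] P →ₗ[R] A) (hB : ∀ (X X' : 𝔞) Y, B ⁅X, X'⁆ Y = 0) (f f' : ℤ →₀ 𝔞) (g : ℤ →₀ P) :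
    loopPairing B (loopBracket f f') g = 0 := by
  simp [loopPairing, loopBracket, map_finsuppSum, LinearMap.finsupp_sum_apply, hB]

theorem loopPairing_loopBracket_right {M : Type*} [AddCommGroup M] [Module R M]
    (B : M →ₗ[R] 𝔤 →ₗ[R] A) (hB : ∀ X (Y Y' : 𝔤), B X ⁅Y, Y'⁆ = 0) (f : ℤ →₀ M) (g g' : ℤ →₀ 𝔤) :
    loopPairing B f (loopBracket g g') = 0 := by
  have apply_single_lie (k m : ℤ) (X : M) (Y Y' : 𝔤) :
      B X (Finsupp.single m ⁅Y, Y'⁆ k) = 0 := by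
    rw [Finsupp.single_apply]
    split_ifs <;> simp [hB]
  simp [loopPairing_apply, loopBracket, map_finsuppSum, apply_single_lie]

/-- The bracket of `W ⊕ L𝔞 ⊕ L𝔤`, where `W` acts on both loop algebras, which commute with each
other. With `L_m = -t^m · t d/dt`, the bracket of two vector fields `a`, `b` is `a · b - b · a`,
where `·` is the action on the coefficient functions. -/
noncomputable def wittLoopBracket (x y : (ℤ →₀ R) × (ℤ →₀ 𝔞) × (ℤ →₀ 𝔤)) :
    (ℤ →₀ R) × (ℤ →₀ 𝔞) × (ℤ →₀ 𝔤) :=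
  (wittAction x.1 y.1 - wittAction y.1 x.1,
    wittAction x.1 y.2.1 - wittAction y.1 x.2.1 + loopBracket x.2.1 y.2.1,
    wittAction x.1 y.2.2 - wittAction y.1 x.2.2 + loopBracket x.2.2 y.2.2)

theorem wGlLoopOmega_cocycle_general (B : 𝔞 →ₗ[R] 𝔤 →ₗ[R] A)
    (hB_left : ∀ (X X' : 𝔞) Y, B ⁅X, X'⁆ Y = 0) (hB_right : ∀ X (Y Y' : 𝔤), B X ⁅Y, Y'⁆ = 0)
    (x y z : (ℤ →₀ R) × (ℤ →₀ 𝔞) × (ℤ →₀ 𝔤)) :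
    wittLoopForm B (wittLoopBracket x y) z + wittLoopForm B (wittLoopBracket y z) x
      + wittLoopForm B (wittLoopBracket z x) y = 0 := by
  simp only [wittLoopForm, wittLoopBracket, map_add, map_sub, LinearMap.add_apply,
    LinearMap.sub_apply, loopPairing_loopBracket_left B hB_left,
    loopPairing_loopBracket_right B hB_right, loopPairing_wittAction_left]
  abel

end Brackets

attribute [local instance] LieRing.ofAssociativeRing

section Comparison

variable (N : ℕ) {𝔤 : Type*} [LieRing 𝔤] [LieAlgebra ℝ 𝔤]

theorem wGlLoopBracket_eq_wittLoopBracket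
    (x y : (ℤ →₀ ℝ) × (ℤ →₀ Matrix (Fin N) (Fin N) ℝ) × (ℤ →₀ 𝔤)) :
    wGlLoopBracket N 𝔤 x y = wittLoopBracket x y := by
  rw [wittLoopBracket, wittAction_commutator, wittAction_sub_wittAction,
    wittAction_sub_wittAction]
  rfl

/-- The bilinear map `(X, Y) ↦ tr(X) φ(Y)` on `gl(N) × 𝔤`. -/
noncomputable def traceMul (φ : 𝔤 →ₗ[ℝ] ℝ) : Matrix (Fin N) (Fin N) ℝ →ₗ[ℝ] 𝔤 →ₗ[ℝ] ℝ :=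
  (LinearMap.mul ℝ ℝ).compl₁₂ (Matrix.traceLinearMap (Fin N) ℝ ℝ) φ

theorem traceMul_lie_left (φ : 𝔤 →ₗ[ℝ] ℝ) (X X' : Matrix (Fin N) (Fin N) ℝ) (Y : 𝔤) :
    traceMul N φ ⁅X, X'⁆ Y = 0 := by
  simp [traceMul, Ring.lie_def, Matrix.trace_mul_comm X X']

theorem traceMul_lie_right (φ : 𝔤 →ₗ[ℝ] ℝ) (hφ : ∀ X Y : 𝔤, φ ⁅X, Y⁆ = 0)
    (X : Matrix (Fin N) (Fin N) ℝ) (Y Y' : 𝔤) : traceMul N φ X ⁅Y, Y'⁆ = 0 := by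
  simp [traceMul, hφ]

theorem wGlLoopOmega_eq_wittLoopForm (φ : 𝔤 →ₗ[ℝ] ℝ)
    (x y : (ℤ →₀ ℝ) × (ℤ →₀ Matrix (Fin N) (Fin N) ℝ) × (ℤ →₀ 𝔤)) :
    wGlLoopOmega N 𝔤 φ x y = wittLoopForm (traceMul N φ) x y := by
  simp [wGlLoopOmega, wittLoopForm, loopPairing_apply, traceMul, mul_assoc]

end Comparison

/-- Cocycle underlying the `g'^a`-term of eq. (4.3): for a finite-dimensional real
Lie algebra `𝔤` and a linear functional `φ` vanishing on `[𝔤,𝔤]`, the form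
`ω(X(m), Y(n)) = m δ_{m+n,0} tr(X) φ(Y)` is a 2-cocycle on `W ⊕ L gl(N) ⊕ L𝔤`. -/
theorem wGlLoopOmega_cocycle (N : ℕ) (hN : 1 ≤ N) (𝔤 : Type*) [LieRing 𝔤]
    [LieAlgebra ℝ 𝔤] [FiniteDimensional ℝ 𝔤]
    (φ : 𝔤 →ₗ[ℝ] ℝ) (hφ : ∀ X Y : 𝔤, φ ⁅X, Y⁆ = 0) :
    ∀ x y z : (ℤ →₀ ℝ) × (ℤ →₀ Matrix (Fin N) (Fin N) ℝ) × (ℤ →₀ 𝔤),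
      wGlLoopOmega N 𝔤 φ (wGlLoopBracket N 𝔤 x y) z
        + wGlLoopOmega N 𝔤 φ (wGlLoopBracket N 𝔤 y z) x
        + wGlLoopOmega N 𝔤 φ (wGlLoopBracket N 𝔤 z x) y = 0 := by
  simpa only [wGlLoopBracket_eq_wittLoopBracket, wGlLoopOmega_eq_wittLoopForm] using
    wGlLoopOmega_cocycle_general (traceMul N φ) (traceMul_lie_left N φ)
      (traceMul_lie_right N φ hφ)
end
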